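/- arXiv:2401.15512 — 3 statements merged into one kernel-verified Lean document; each statement's English description precedes it below -/
import Mathlib

section
/- Let f be the higher energy function of order ℓ ≥ 0, and let N_k ≥ 1 be integers for 0 ≤ k ≤ ℓ, with N = Σ_{k=0}^ℓ N_k (and N = N_0 ≥ 2 when ℓ = 0). Then there exists exactly one MIW sequence (x_n)_{n=1}^N of f that satisfies the left boundary condition at x_0 = −∞ and the right boundary condition at x_{N+1} = +∞ and has exactly N_k of its points in the region R_k for each 0 ≤ k ≤ ℓ. -/
/-!
MIW sequences are the critical points of a strictly log-concave function. For an increasing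
configuration put

  `F(x) = ∏ f(x_n) · ∏ (x_{n+1} - x_n)`.

The logarithmic derivative of `F` in `x_n` is
`(log f)'(x_n) - (1/(x_{n+1} - x_n) - 1/(x_n - x_{n-1}))`, with missing neighbours contributing
`0` (`logDeriv_objective`), so the recursion together with both boundary conditions says exactly
that `x` is a critical point. Since the Hermite polynomial is monic of degree `l` with `l`
distinct real zeros `r i`, we have `f(t) = c ∏ (t - r i)² exp(-t²/2)` (`heFun_eq_prod`) and
`(log f)'(t) = 2 ∑ 1/(t - r i) - t`, which is strictly decreasing between consecutive zeros.

Prescribing the number of points in each region amounts to prescribing how many points lie to the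
left of each zero (`Adm`, `adm_of_regionCount`, `Adm.regionCount_eq`).

Existence (`exists_critical`): on the closed set of weakly ordered configurations, `F` tends to `0`
as any point escapes to infinity, because the gaps grow polynomially and `f` decays like a
Gaussian. So `F` attains its maximum there; the maximum is positive, whereas `F` vanishes on the
boundary, so the maximizer is interior and critical.

Uniqueness (`adm_le`): given two solutions `x`, `y`, look at an index where `y n - x n` is largest.
If this difference were positive, the recursion would force `(log f)'(y n) ≥ (log f)'(x n)` for
points `x n < y n` of the same region, contradicting strict monotonicity.
-/
open MeasureTheory Filter Set

noncomputable section

/-- The probabilists' Hermite polynomial `p_l(x) = (-1)^l e^{x^2/2} (d/dx)^l e^{-x^2/2}`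
as a real function. -/
def hermiteFun (l : ℕ) (x : ℝ) : ℝ :=
  (-1 : ℝ) ^ l * Real.exp (x ^ 2 / 2) *
    iteratedDeriv l (fun t => Real.exp (-t ^ 2 / 2)) x

/-- The higher energy function of order `l` with normalizing constant `c`. -/
def heFun (l : ℕ) (c : ℝ) (x : ℝ) : ℝ :=
  c * hermiteFun l x ^ 2 * Real.exp (-x ^ 2 / 2)

/-- `c` is the constant making `heFun l c` a probability density on `ℝ`. -/
def IsNormalizing (l : ℕ) (c : ℝ) : Prop :=
  0 < c ∧ (∫ x : ℝ, heFun l c x) = 1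

/-- `(x n)_{n=1}^N` is an MIW sequence of `f` : strictly increasing, avoiding the
zeros of `f`, and satisfying the MIW recursion for `1 < n < N`. -/
def IsMIW (f : ℝ → ℝ) (N : ℕ) (x : ℕ → ℝ) : Prop :=
  (∀ n, 1 ≤ n → n < N → x n < x (n + 1)) ∧
  (∀ n, 1 ≤ n → n ≤ N → f (x n) ≠ 0) ∧
  (∀ n, 1 < n → n < N →
    1 / (x (n + 1) - x n) - 1 / (x n - x (n - 1)) = deriv f (x n) / f (x n))

/-- Left boundary condition at `x_0 = -∞`. -/
def LeftBC (f : ℝ → ℝ) (x : ℕ → ℝ) : Prop :=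
  1 / (x 2 - x 1) = deriv f (x 1) / f (x 1)

/-- Right boundary condition at `x_{N+1} = +∞`. -/
def RightBC (f : ℝ → ℝ) (N : ℕ) (x : ℕ → ℝ) : Prop :=
  -(1 / (x N - x (N - 1))) = deriv f (x N) / f (x N)

/-- Right boundary condition at a point (`none` denoting `+∞`). -/
def RightBCAt (f : ℝ → ℝ) (N : ℕ) (x : ℕ → ℝ) : Option ℝ → Prop
  | none => -(1 / (x N - x (N - 1))) = deriv f (x N) / f (x N)
  | some b => x N < b ∧
      1 / (b - x N) - 1 / (x N - x (N - 1)) = deriv f (x N) / f (x N)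

/-- `r 1 < ⋯ < r l` enumerates the zeros of `f`. -/
def ZeroEnum (f : ℝ → ℝ) (l : ℕ) (r : ℕ → ℝ) : Prop :=
  (∀ i j, 1 ≤ i → i < j → j ≤ l → r i < r j) ∧
  {y : ℝ | f y = 0} = r '' Set.Icc 1 l

/-- Membership in the region `R_k = (r_k, r_{k+1})`, with the conventions
`r_0 = -∞` and `r_{l+1} = +∞`. -/
def InRegion (l : ℕ) (r : ℕ → ℝ) (k : ℕ) (t : ℝ) : Prop :=
  (k = 0 ∨ r k < t) ∧ (k = l ∨ t < r (k + 1))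

/-- The region `R_k` as a subset of `ℝ`. -/
def regionSet (l : ℕ) (r : ℕ → ℝ) (k : ℕ) : Set ℝ := {t | InRegion l r k t}

/-- The number of points of `(x n)_{n=1}^N` lying in region `R_k`. -/
def regionCount (l : ℕ) (r : ℕ → ℝ) (N : ℕ) (x : ℕ → ℝ) (k : ℕ) : ℕ :=
  Set.ncard {n : ℕ | n ∈ Set.Icc 1 N ∧ InRegion l r k (x n)}

/-- `n(t) = max {0 ≤ k ≤ N : x_k ≤ t}` (convention `x_0 = -∞`); for an increasing
sequence this is the number of points among `x_1, …, x_N` that are `≤ t`. -/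
def nIdx (N : ℕ) (x : ℕ → ℝ) (t : ℝ) : ℕ :=
  Set.ncard {n : ℕ | n ∈ Set.Icc 1 N ∧ x n ≤ t}

/-- `1/(x_{n+1}-x_n) - 1/(x_n-x_{n-1})`, with the conventions `x_0 = -∞`,
`x_{N+1} = +∞` (so the corresponding reciprocals vanish). -/
def gapTerm (N : ℕ) (x : ℕ → ℝ) (n : ℕ) : ℝ :=
  (if n < N then 1 / (x (n + 1) - x n) else 0) -
    (if 1 < n then 1 / (x n - x (n - 1)) else 0)

/-- The MIW energy `H(x_1,…,x_N)`. -/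
def Hfun (N : ℕ) (x : ℕ → ℝ) : ℝ :=
  ∑ n ∈ Finset.Icc 1 N, x n ^ 2 + ∑ n ∈ Finset.Icc 1 N, gapTerm N x n ^ 2

/-- Partial derivative `∂H/∂x_n` evaluated at the configuration `x`. -/
def partialH (N : ℕ) (x : ℕ → ℝ) (n : ℕ) : ℝ :=
  deriv (fun s => Hfun N (Function.update x n s)) (x n)

/-- The empirical distribution `(1/N) ∑_{n=1}^N δ_{x_n}`. -/
def empDist (N : ℕ) (x : ℕ → ℝ) : Measure ℝ :=
  (N : ENNReal)⁻¹ • ∑ n ∈ Finset.Icc 1 N, Measure.dirac (x n)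

/-- The probability measure on `S` with density proportional to `f`. -/
def densMeasure (f : ℝ → ℝ) (S : Set ℝ) : Measure ℝ :=
  (volume.restrict S).withDensity fun t => ENNReal.ofReal (f t / ∫ u in S, f u)

/-- The Stein solution `g_h(x) = (1/f(x)) ∫_a^x f(t)(h(t) - E_P[h]) dt`, where the
integral runs over the part of `S` to the left of `x`. -/
def steinG (f : ℝ → ℝ) (S : Set ℝ) (h : ℝ → ℝ) (x : ℝ) : ℝ :=
  (1 / f x) * ∫ t in S ∩ Set.Iio x, f t * (h t - ∫ s, h s ∂(densMeasure f S))

/-- The intermediate density `ρ(t) = 1/((N-1)(x_{n(t)+1} - x_{n(t)}))` on `(x_1, x_N)`. -/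
def interDens (N : ℕ) (x : ℕ → ℝ) (t : ℝ) : ℝ :=
  Set.indicator (Set.Ioo (x 1) (x N))
    (fun u => 1 / (((N : ℝ) - 1) * (x (nIdx N x u + 1) - x (nIdx N x u)))) t

/-- The intermediate distribution `R` with density `ρ`. -/
def interDist (N : ℕ) (x : ℕ → ℝ) : Measure ℝ :=
  volume.withDensity fun t => ENNReal.ofReal (interDens N x t)

/-! ### The higher energy function in factored form -/

lemma hermiteFun_eq_eval (l : ℕ) (x : ℝ) :
    hermiteFun l x = ((Polynomial.hermite l).map (Int.castRingHom ℝ)).eval x := by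
  have h := Polynomial.hermite_eq_deriv_gaussian' l x
  have h2 : Polynomial.aeval x (Polynomial.hermite l)
      = ((Polynomial.hermite l).map (Int.castRingHom ℝ)).eval x := by
    rw [Polynomial.aeval_def, Polynomial.eval_map]; rfl
  rw [← h2, h, hermiteFun, iteratedDeriv_eq_iterate]
  have : (fun t : ℝ => Real.exp (-t ^ 2 / 2)) = fun y => Real.exp (-(y ^ 2 / 2)) := by
    funext t; ring_nf
  rw [this]; ring

/-- A monic polynomial of degree `l` with `l` distinct roots is the product of its linear
factors, so the enumeration of the zeros of `f` makes `f` explicit. -/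
lemma heFun_eq_prod (l : ℕ) (c : ℝ) (hc : 0 < c) (r : ℕ → ℝ) (hr : ZeroEnum (heFun l c) l r)
    (x : ℝ) :
    heFun l c x = c * (∏ i ∈ Finset.Icc 1 l, (x - r i)) ^ 2 * Real.exp (-x ^ 2 / 2) := by
  set P := (Polynomial.hermite l).map (Int.castRingHom ℝ) with hP
  have hmon : P.Monic := (Polynomial.hermite_monic l).map _
  have hdeg : P.natDegree = l := by
    rw [hP, (Polynomial.hermite_monic l).natDegree_map, Polynomial.natDegree_hermite]
  have hinj : Set.InjOn r (Finset.Icc 1 l : Finset ℕ) := by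
    intro i hi j hj hij
    simp only [Finset.coe_Icc, Set.mem_Icc] at hi hj
    rcases lt_trichotomy i j with h | h | h
    · exact absurd hij (hr.1 i j hi.1 h hj.2).ne
    · exact h
    · exact absurd hij (hr.1 j i hj.1 h hi.2).ne'
  have hroot : ∀ i ∈ Finset.Icc 1 l, P.IsRoot (r i) := by
    intro i hi
    have : r i ∈ {y : ℝ | heFun l c y = 0} := by
      rw [hr.2]; exact ⟨i, by simpa using hi, rfl⟩
    simp only [Set.mem_ofPred_eq, heFun, hermiteFun_eq_eval, mul_eq_zero, hc.ne', false_or,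
      (Real.exp_pos _).ne', or_false] at this
    exact pow_eq_zero_iff (two_ne_zero) |>.1 this
  have hle : (Finset.Icc 1 l).val.map r ≤ P.roots := by
    rw [Multiset.le_iff_subset (by exact (Finset.nodup_map_iff_injOn).2 hinj)]
    intro a ha
    obtain ⟨i, hi, rfl⟩ := Multiset.mem_map.1 ha
    exact (Polynomial.mem_roots hmon.ne_zero).2 (hroot i hi)
  have heq : (Finset.Icc 1 l).val.map r = P.roots := by
    apply Multiset.eq_of_le_of_card_le hle
    have := P.card_roots'
    simpa [hdeg] using this
  have hprod := Polynomial.prod_multiset_X_sub_C_of_monic_of_roots_card_eq hmon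
    (by rw [← heq, hdeg]; simp)
  rw [← heq, Multiset.map_map] at hprod
  have hev : P.eval x = ∏ i ∈ Finset.Icc 1 l, (x - r i) := by
    conv_lhs => rw [← hprod]
    change Polynomial.eval x (∏ i ∈ Finset.Icc 1 l, (Polynomial.X - Polynomial.C (r i))) = _
    simp [Polynomial.eval_prod]
  rw [heFun, hermiteFun_eq_eval, ← hP, hev]

lemma logDeriv_prodGaussian (l : ℕ) (c : ℝ) (hc : 0 < c) (r : ℕ → ℝ) (x : ℝ)
    (hx : ∀ i ∈ Finset.Icc 1 l, x ≠ r i) :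
    logDeriv (fun t => c * (∏ i ∈ Finset.Icc 1 l, (t - r i)) ^ 2 * Real.exp (-t ^ 2 / 2)) x
      = 2 * ∑ i ∈ Finset.Icc 1 l, 1 / (x - r i) - x := by
  have hne : ∀ i ∈ Finset.Icc 1 l, x - r i ≠ 0 := fun i hi => sub_ne_zero.2 (hx i hi)
  have hp : (∏ i ∈ Finset.Icc 1 l, (x - r i)) ≠ 0 := Finset.prod_ne_zero_iff.2 hne
  have hd : DifferentiableAt ℝ (fun t => ∏ i ∈ Finset.Icc 1 l, (t - r i)) x := by fun_prop
  rw [logDeriv_mul (f := fun t => c * (∏ i ∈ Finset.Icc 1 l, (t - r i)) ^ 2)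
      (g := fun t : ℝ => Real.exp (-t ^ 2 / 2)) x (mul_ne_zero hc.ne' (pow_ne_zero 2 hp))
      (Real.exp_pos _).ne' (by fun_prop) (by fun_prop),
    logDeriv_const_mul x c hc.ne', logDeriv_fun_pow hd,
    logDeriv_prod (f := fun i t => t - r i) hne (by intros; fun_prop)]
  have h1 : ∀ i, logDeriv (fun t => t - r i) x = 1 / (x - r i) := by
    intro i; simp [logDeriv_apply]
  have h2 : HasDerivAt (fun t : ℝ => Real.exp (-t ^ 2 / 2))
      (Real.exp (-x ^ 2 / 2) * (-(2 * x) / 2)) x := by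
    have := (((hasDerivAt_id x).pow 2).neg.div_const 2).exp
    simpa using this
  simp only [h1]
  rw [logDeriv_apply, h2.deriv]
  field_simp
  push_cast
  ring

/-- The Gaussian factor beats any polynomial. -/
lemma tendsto_prodGaussian (l : ℕ) (c : ℝ) (hc : 0 < c) (r : ℕ → ℝ) :
    Tendsto (fun t => c * (∏ i ∈ Finset.Icc 1 l, (t - r i)) ^ 2 * Real.exp (-t ^ 2 / 2)
      * (1 + |t|) ^ 2) (cocompact ℝ) (nhds 0) := by
  set C := c * (∏ i ∈ Finset.Icc 1 l, (1 + |r i|)) ^ 2 * Real.exp (1 / 2) with hC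
  have h1 : Tendsto (fun u : ℝ => C * ((1 + u) ^ (2 * l + 2) / Real.exp u)) atTop (nhds 0) := by
    have := (Polynomial.tendsto_div_exp_atTop
      ((1 + Polynomial.X : Polynomial ℝ) ^ (2 * l + 2))).const_mul C
    simpa using this
  have h2 := h1.comp (tendsto_norm_cocompact_atTop (E := ℝ))
  refine squeeze_zero (fun t => by positivity) (fun t => ?_) h2
  simp only [Function.comp, Real.norm_eq_abs]
  have hprod : |∏ i ∈ Finset.Icc 1 l, (t - r i)|
      ≤ (∏ i ∈ Finset.Icc 1 l, (1 + |r i|)) * (1 + |t|) ^ l := by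
    rw [Finset.abs_prod]
    calc _ ≤ ∏ i ∈ Finset.Icc 1 l, ((1 + |r i|) * (1 + |t|)) := by
          refine Finset.prod_le_prod (fun _ _ => abs_nonneg _) (fun i _ => ?_)
          have := abs_sub t (r i)
          nlinarith [abs_nonneg t, abs_nonneg (r i), mul_nonneg (abs_nonneg t) (abs_nonneg (r i))]
      _ = _ := by rw [Finset.prod_mul_distrib]; simp
  have hsq : (∏ i ∈ Finset.Icc 1 l, (t - r i)) ^ 2
      ≤ ((∏ i ∈ Finset.Icc 1 l, (1 + |r i|)) * (1 + |t|) ^ l) ^ 2 := by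
    rw [← sq_abs]
    exact pow_le_pow_left₀ (abs_nonneg _) hprod 2
  have hexp : Real.exp (-t ^ 2 / 2) ≤ Real.exp (1 / 2) * (Real.exp |t|)⁻¹ := by
    rw [← Real.exp_neg, ← Real.exp_add, Real.exp_le_exp]
    nlinarith [sq_nonneg (|t| - 1), sq_abs t]
  calc _ ≤ c * ((∏ i ∈ Finset.Icc 1 l, (1 + |r i|)) * (1 + |t|) ^ l) ^ 2
        * (Real.exp (1 / 2) * (Real.exp |t|)⁻¹) * (1 + |t|) ^ 2 := by gcongr
    _ = _ := by rw [hC]; field_simp; ring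

/-! ### Admissible configurations -/

/-- With `S i = N_0 + ⋯ + N_{i-1}`, a configuration `x_1 < ⋯ < x_N` with `N_k` points in each
region `R_k` is one in which exactly the first `S i` points lie to the left of the zero `r_i`,
and no point is a zero. -/
def Adm (l N : ℕ) (r : ℕ → ℝ) (S : ℕ → ℕ) (x : ℕ → ℝ) : Prop :=
  (∀ n, 1 ≤ n → n < N → x n < x (n + 1)) ∧
  (∀ i ∈ Finset.Icc 1 l, ∀ n ∈ Finset.Icc 1 N,
    (n ≤ S i → x n < r i) ∧ (S i < n → r i < x n))

lemma Adm.ne {l N : ℕ} {r : ℕ → ℝ} {S : ℕ → ℕ} {x : ℕ → ℝ} (h : Adm l N r S x) {n : ℕ}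
    (hn : n ∈ Finset.Icc 1 N) : ∀ i ∈ Finset.Icc 1 l, x n ≠ r i := by
  intro i hi
  rcases le_or_gt n (S i) with h1 | h1
  · exact ((h.2 i hi n hn).1 h1).ne
  · exact ((h.2 i hi n hn).2 h1).ne'

lemma lt_of_step {N : ℕ} {x : ℕ → ℝ} (h : ∀ n, 1 ≤ n → n < N → x n < x (n + 1))
    {a b : ℕ} (ha : 1 ≤ a) (hab : a < b) (hb : b ≤ N) : x a < x b := by
  induction b, hab using Nat.le_induction with
  | base => exact h a ha (by omega)
  | succ k hk ih => exact (ih (by omega)).trans (h k (by omega) (by omega))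

lemma le_of_step {N : ℕ} {x : ℕ → ℝ} (h : ∀ n, 1 ≤ n → n < N → x n < x (n + 1))
    {a b : ℕ} (ha : 1 ≤ a) (hab : a ≤ b) (hb : b ≤ N) : x a ≤ x b := by
  rcases hab.eq_or_lt with rfl | h1
  · exact le_rfl
  · exact (lt_of_step h ha h1 hb).le

/-- The points are placed from left to right; since `S` is monotone and `r` increasing, the
bounds on the next point are always compatible. -/
lemma exists_adm (l N : ℕ) (r : ℕ → ℝ) (S : ℕ → ℕ) (hS : Monotone S)
    (hr : ∀ i j, 1 ≤ i → i < j → j ≤ l → r i < r j) : ∃ x, Adm l N r S x := by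
  classical
  induction N with
  | zero =>
    refine ⟨fun _ => 0, fun n h1 h2 => by omega, fun i _ n hn => ?_⟩
    simp at hn
  | succ N ih =>
    obtain ⟨x, hx1, hx2⟩ := ih
    obtain ⟨t, ht1, ht2⟩ := Order.exists_between_finsets
      (((Finset.Icc 1 l).filter (fun i => S i < N + 1)).image r ∪ (Finset.Icc 1 N).image x)
      (((Finset.Icc 1 l).filter (fun i => N + 1 ≤ S i)).image r) (by
        intro a ha b hb
        simp only [Finset.mem_union, Finset.mem_image, Finset.mem_filter] at ha hb
        obtain ⟨j, ⟨hj, hSj⟩, rfl⟩ := hb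
        rcases ha with ⟨i, ⟨hi, hSi⟩, rfl⟩ | ⟨n, hn, rfl⟩
        · simp only [Finset.mem_Icc] at hi hj
          refine hr i j hi.1 ?_ hj.2
          by_contra hlt
          have := hS (not_lt.1 hlt)
          omega
        · refine (hx2 j hj n hn).1 ?_
          simp only [Finset.mem_Icc] at hn
          omega)
    refine ⟨Function.update x (N + 1) t, fun n h1 h2 => ?_, fun i hi n hn => ?_⟩
    · rw [Function.update_of_ne (by omega)]
      rcases Nat.lt_or_ge n N with h | h
      · rw [Function.update_of_ne (by omega)]; exact hx1 n h1 h
      · obtain rfl : n = N := by omega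
        rw [Function.update_self]
        exact ht1 _ (Finset.mem_union_right _ (Finset.mem_image_of_mem x (by simp [h1])))
    · simp only [Finset.mem_Icc] at hn
      rcases Nat.lt_or_ge n (N + 1) with h | h
      · rw [Function.update_of_ne (by omega)]
        exact hx2 i hi n (by simp; omega)
      · obtain rfl : n = N + 1 := by omega
        rw [Function.update_self]
        refine ⟨fun h => ht2 _ (Finset.mem_image_of_mem r ?_), fun h =>
          ht1 _ (Finset.mem_union_left _ (Finset.mem_image_of_mem r ?_))⟩ <;>
        simp only [Finset.mem_filter] <;> exact ⟨hi, h⟩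

lemma Adm.regionCount_eq {l N : ℕ} {r : ℕ → ℝ} {Nk : ℕ → ℕ} {x : ℕ → ℝ}
    (hN : N = ∑ k ∈ Finset.range (l + 1), Nk k)
    (h : Adm l N r (fun i => ∑ k ∈ Finset.range i, Nk k) x) {k : ℕ} (hk : k ≤ l) :
    regionCount l r N x k = Nk k := by
  have hset : {n : ℕ | n ∈ Set.Icc 1 N ∧ InRegion l r k (x n)}
      = (Finset.Ioc (∑ j ∈ Finset.range k, Nk j) (∑ j ∈ Finset.range (k + 1), Nk j) :
          Finset ℕ) := by
    have hle : ∑ j ∈ Finset.range (k + 1), Nk j ≤ N := by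
      rw [hN]
      exact Finset.sum_le_sum_of_subset (Finset.range_subset_range.2 (by omega))
    ext n
    simp only [Set.mem_ofPred_eq, Set.mem_Icc, Finset.coe_Ioc, Set.mem_Ioc, InRegion]
    have hl : ∀ n, 1 ≤ n → n ≤ N →
        ((k = 0 ∨ r k < x n) ↔ ∑ j ∈ Finset.range k, Nk j < n) := by
      intro n h1 h2
      rcases Nat.eq_zero_or_pos k with rfl | hk0
      · simp; omega
      · have := h.2 k (by simp; omega) n (by simp; omega)
        constructor
        · rintro (h3 | h3)
          · omega
          · by_contra h4
            exact absurd (this.1 (not_lt.1 h4)) (not_lt.2 h3.le)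
        · exact fun h3 => Or.inr (this.2 h3)
    have hu : ∀ n, 1 ≤ n → n ≤ N →
        ((k = l ∨ x n < r (k + 1)) ↔ n ≤ ∑ j ∈ Finset.range (k + 1), Nk j) := by
      intro n h1 h2
      rcases hk.eq_or_lt with rfl | hk0
      · rw [← hN]; simp [h2]
      · have := h.2 (k + 1) (by simp; omega) n (by simp; omega)
        constructor
        · rintro (h3 | h3)
          · omega
          · by_contra h4
            exact absurd (this.2 (not_le.1 h4)) (not_lt.2 h3.le)
        · exact fun h3 => Or.inr (this.1 h3)
    constructor
    · rintro ⟨⟨h1, h2⟩, h3, h4⟩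
      exact ⟨(hl n h1 h2).1 h3, (hu n h1 h2).1 h4⟩
    · rintro ⟨h3, h4⟩
      have h1 : 1 ≤ n := by omega
      have h2 : n ≤ N := by omega
      exact ⟨⟨h1, h2⟩, (hl n h1 h2).2 h3, (hu n h1 h2).2 h4⟩
  rw [regionCount, hset, Set.ncard_coe_finset, Nat.card_Ioc, Finset.sum_range_succ]
  omega

/-- Counting the points to the left of `r_i` region by region. -/
lemma ncard_left {l N : ℕ} {r : ℕ → ℝ} {Nk : ℕ → ℕ} {x : ℕ → ℝ}
    (hr : ∀ i j, 1 ≤ i → i < j → j ≤ l → r i < r j)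
    (hne : ∀ n ∈ Finset.Icc 1 N, ∀ i ∈ Finset.Icc 1 l, x n ≠ r i)
    (hcount : ∀ k ≤ l, regionCount l r N x k = Nk k) (k : ℕ) (hk : k + 1 ≤ l) :
    Set.ncard {n : ℕ | n ∈ Set.Icc 1 N ∧ x n < r (k + 1)}
      = ∑ j ∈ Finset.range (k + 1), Nk j := by
  induction k with
  | zero =>
    have := hcount 0 (by omega)
    simp only [regionCount, InRegion] at this
    simp only [zero_add, Finset.range_one, Finset.sum_singleton]
    rw [← this]
    congr 1
    ext n
    have : ¬ (0 = l) := by omega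
    simp [this]
  | succ k ih =>
    rw [Finset.sum_range_succ, ← ih (by omega), ← hcount (k + 1) (by omega), regionCount,
      ← Set.ncard_union_eq]
    · congr 1
      ext n
      have h1 : ¬ (k + 1 = l) := by omega
      simp only [Set.mem_ofPred_eq, Set.mem_union, InRegion, h1, false_or, Nat.succ_ne_zero,
        Set.mem_Icc]
      have h2 := hr (k + 1) (k + 1 + 1) (by omega) (by omega) (by omega)
      constructor
      · rintro ⟨h3, h4⟩
        rcases lt_or_gt_of_ne (hne n (by simpa using h3) (k + 1) (by simp; omega)) with h5 | h5
        · exact Or.inl ⟨h3, h5⟩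
        · exact Or.inr ⟨h3, h5, h4⟩
      · rintro (⟨h3, h4⟩ | ⟨h3, h4, h5⟩)
        · exact ⟨h3, h4.trans h2⟩
        · exact ⟨h3, h5⟩
    · rw [Set.disjoint_left]
      rintro n ⟨_, h3⟩ ⟨_, h4, _⟩
      rcases h4 with h4 | h4
      · omega
      · exact absurd h3 (not_lt.2 h4.le)

lemma adm_of_regionCount {l N : ℕ} {r : ℕ → ℝ} {Nk : ℕ → ℕ} {x : ℕ → ℝ}
    (hr : ∀ i j, 1 ≤ i → i < j → j ≤ l → r i < r j)
    (hx : ∀ n, 1 ≤ n → n < N → x n < x (n + 1))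
    (hne : ∀ n ∈ Finset.Icc 1 N, ∀ i ∈ Finset.Icc 1 l, x n ≠ r i)
    (hcount : ∀ k ≤ l, regionCount l r N x k = Nk k) :
    Adm l N r (fun i => ∑ k ∈ Finset.range i, Nk k) x := by
  refine ⟨hx, fun i hi n hn => ?_⟩
  have hne' := hne n hn i hi
  obtain ⟨hi1, hi2⟩ := Finset.mem_Icc.1 hi
  obtain ⟨hn1, hn2⟩ := Finset.mem_Icc.1 hn
  obtain ⟨k, rfl⟩ : ∃ k, i = k + 1 := ⟨i - 1, by omega⟩
  have hc := ncard_left hr hne hcount k hi2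
  have hfin : {n : ℕ | n ∈ Set.Icc 1 N ∧ x n < r (k + 1)}.Finite :=
    (Set.finite_Icc 1 N).subset fun n hn => hn.1
  dsimp only
  rw [← hc]
  constructor
  · intro hle
    by_contra hlt
    have hsub : {n : ℕ | n ∈ Set.Icc 1 N ∧ x n < r (k + 1)} ⊆ (Finset.Icc 1 (n - 1) : Finset ℕ) := by
      rintro m ⟨⟨hm1, hm2⟩, hm⟩
      simp only [Finset.coe_Icc, Set.mem_Icc]
      refine ⟨hm1, ?_⟩
      by_contra hmn
      exact hlt ((le_of_step hx hn1 (by omega) hm2).trans_lt hm)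
    have := Set.ncard_le_ncard hsub
    rw [Set.ncard_coe_finset, Nat.card_Icc] at this
    omega
  · intro hlt
    by_contra hle
    have hlt' : x n < r (k + 1) := lt_of_le_of_ne (not_lt.1 hle) hne'
    have hsub : ((Finset.Icc 1 n : Finset ℕ) : Set ℕ)
        ⊆ {n : ℕ | n ∈ Set.Icc 1 N ∧ x n < r (k + 1)} := by
      intro m hm
      simp only [Finset.coe_Icc, Set.mem_Icc] at hm
      exact ⟨⟨hm.1, hm.2.trans hn2⟩, (le_of_step hx hm.1 hm.2 hn2).trans_lt hlt'⟩
    have := Set.ncard_le_ncard hsub hfin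
    rw [Set.ncard_coe_finset, Nat.card_Icc] at this
    omega

/-! ### Uniqueness: a maximum principle -/

/-- At an index maximizing `y n - x n`, the gaps of `y` are no larger on the right and no smaller
on the left than those of `x`, so the left-hand side of the recursion is at least as large for
`y`. If the maximum were positive, the right-hand side would be strictly smaller for `y`, because
`2 ∑ 1 / (t - r i) - t` is strictly decreasing between consecutive zeros. -/
lemma adm_le {l N : ℕ} {r : ℕ → ℝ} {S : ℕ → ℕ} {x y : ℕ → ℝ} (hx : Adm l N r S x)
    (hy : Adm l N r S y)
    (hxe : ∀ n ∈ Finset.Icc 1 N,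
      gapTerm N x n = 2 * ∑ i ∈ Finset.Icc 1 l, 1 / (x n - r i) - x n)
    (hye : ∀ n ∈ Finset.Icc 1 N,
      gapTerm N y n = 2 * ∑ i ∈ Finset.Icc 1 l, 1 / (y n - r i) - y n) :
    ∀ n ∈ Finset.Icc 1 N, y n ≤ x n := by
  intro m hm
  obtain ⟨n, hn, hmax⟩ := Finset.exists_max_image (Finset.Icc 1 N) (fun n => y n - x n) ⟨m, hm⟩
  by_contra hcon
  have hpos : x n < y n := by have := hmax m hm; linarith
  obtain ⟨hn1, hn2⟩ := Finset.mem_Icc.1 hn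
  have hgap : gapTerm N x n ≤ gapTerm N y n := by
    unfold gapTerm
    apply sub_le_sub
    · split_ifs with h
      · have h1 := hx.1 n hn1 h
        have h2 := hy.1 n hn1 h
        have h3 := hmax (n + 1) (by simp; omega)
        exact one_div_le_one_div_of_le (by linarith) (by linarith)
      · exact le_rfl
    · split_ifs with h
      · have h1 := lt_of_step hx.1 (a := n - 1) (b := n) (by omega) (by omega) hn2
        have h2 := lt_of_step hy.1 (a := n - 1) (b := n) (by omega) (by omega) hn2
        have h3 := hmax (n - 1) (by simp; omega)
        exact one_div_le_one_div_of_le (by linarith) (by linarith)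
      · exact le_rfl
  have hsum : ∑ i ∈ Finset.Icc 1 l, 1 / (y n - r i) ≤ ∑ i ∈ Finset.Icc 1 l, 1 / (x n - r i) := by
    refine Finset.sum_le_sum fun i hi => ?_
    rcases le_or_gt n (S i) with h | h
    · have h1 := (hx.2 i hi n hn).1 h
      have h2 := (hy.2 i hi n hn).1 h
      exact one_div_le_one_div_of_neg_of_le (by linarith) (by linarith)
    · have h1 := (hx.2 i hi n hn).2 h
      exact one_div_le_one_div_of_le (by linarith) (by linarith)
  rw [hxe n hn, hye n hn] at hgap
  linarith

/-! ### Existence: maximizing the product of densities and gaps -/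

/-- The objective `∏ f(x_n) ∏ (x_{n+1} - x_n)`, whose logarithmic critical points are the MIW
sequences. -/
def objective (f : ℝ → ℝ) (N : ℕ) (x : ℕ → ℝ) : ℝ :=
  (∏ n ∈ Finset.Icc 1 N, f (x n)) * ∏ n ∈ Finset.Ico 1 N, (x (n + 1) - x n)

/-- The closed version of `Adm`, with weak inequalities. -/
def WAdm (l N : ℕ) (r : ℕ → ℝ) (S : ℕ → ℕ) (x : ℕ → ℝ) : Prop :=
  (∀ n, 1 ≤ n → n < N → x n ≤ x (n + 1)) ∧
  (∀ i ∈ Finset.Icc 1 l, ∀ n ∈ Finset.Icc 1 N,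
    (n ≤ S i → x n ≤ r i) ∧ (S i < n → r i ≤ x n))

lemma Adm.wadm {l N : ℕ} {r : ℕ → ℝ} {S : ℕ → ℕ} {x : ℕ → ℝ} (h : Adm l N r S x) :
    WAdm l N r S x :=
  ⟨fun n h1 h2 => (h.1 n h1 h2).le, fun i hi n hn =>
    ⟨fun h1 => ((h.2 i hi n hn).1 h1).le, fun h1 => ((h.2 i hi n hn).2 h1).le⟩⟩

lemma isClosed_wadm (l N : ℕ) (r : ℕ → ℝ) (S : ℕ → ℕ) : IsClosed {x | WAdm l N r S x} := by
  have h : {x | WAdm l N r S x} =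
      (⋂ n, ⋂ (_ : 1 ≤ n), ⋂ (_ : n < N), {x : ℕ → ℝ | x n ≤ x (n + 1)}) ∩
      ⋂ i ∈ Finset.Icc 1 l, ⋂ n ∈ Finset.Icc 1 N,
        ((⋂ (_ : n ≤ S i), {x : ℕ → ℝ | x n ≤ r i}) ∩
          ⋂ (_ : S i < n), {x : ℕ → ℝ | r i ≤ x n}) := by
    ext x
    simp only [WAdm, Set.mem_ofPred_eq, Set.mem_inter_iff, Set.mem_iInter]
  rw [h]
  refine IsClosed.inter ?_ ?_
  · exact isClosed_iInter fun n => isClosed_iInter fun _ => isClosed_iInter fun _ =>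
      isClosed_le (continuous_apply n) (continuous_apply (n + 1))
  · exact isClosed_iInter fun i => isClosed_iInter fun _ => isClosed_iInter fun n =>
      isClosed_iInter fun _ => IsClosed.inter
        (isClosed_iInter fun _ => isClosed_le (continuous_apply n) continuous_const)
        (isClosed_iInter fun _ => isClosed_le continuous_const (continuous_apply n))

lemma Adm.eventually_update {l N : ℕ} {r : ℕ → ℝ} {S : ℕ → ℕ} {x : ℕ → ℝ} (h : Adm l N r S x)
    (n : ℕ) : ∀ᶠ t in nhds (x n), Adm l N r S (Function.update x n t) := by
  have hcont : ∀ m, Tendsto (fun t => Function.update x n t m) (nhds (x n)) (nhds (x m)) := by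
    intro m
    have : Continuous fun t => Function.update x n t m :=
      (continuous_apply m).comp ((continuous_const (y := x)).update n continuous_id)
    simpa using this.tendsto (x n)
  have h1 : ∀ᶠ t in nhds (x n), ∀ m ∈ Finset.Ico 1 N,
      Function.update x n t m < Function.update x n t (m + 1) := by
    refine (Filter.eventually_all_finset _).2 fun m hm => ?_
    obtain ⟨hm1, hm2⟩ := Finset.mem_Ico.1 hm
    exact (hcont m).eventually_lt (hcont (m + 1)) (h.1 m hm1 hm2)
  have h2 : ∀ᶠ t in nhds (x n), ∀ i ∈ Finset.Icc 1 l, ∀ m ∈ Finset.Icc 1 N,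
      (m ≤ S i → Function.update x n t m < r i) ∧
        (S i < m → r i < Function.update x n t m) := by
    refine (Filter.eventually_all_finset _).2 fun i hi =>
      (Filter.eventually_all_finset _).2 fun m hm => ?_
    rcases le_or_gt m (S i) with hle | hlt
    · filter_upwards [(hcont m).eventually_lt_const ((h.2 i hi m hm).1 hle)] with t ht
      exact ⟨fun _ => ht, fun hh => absurd hle (not_le.2 hh)⟩
    · filter_upwards [(hcont m).eventually_const_lt ((h.2 i hi m hm).2 hlt)] with t ht
      exact ⟨fun hh => absurd hlt (not_lt.2 hh), fun _ => ht⟩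
  filter_upwards [h1, h2] with t ht1 ht2
  exact ⟨fun m hm1 hm2 => ht1 m (Finset.mem_Ico.2 ⟨hm1, hm2⟩), ht2⟩

lemma prod_consecutive_le (a : ℕ → ℝ) (ha : ∀ n, 1 ≤ a n) (N : ℕ) :
    ∏ n ∈ Finset.Ico 1 N, (a n * a (n + 1)) ≤ ∏ n ∈ Finset.Icc 1 N, a n ^ 2 := by
  have hpos : ∀ n, 0 < a n := fun n => one_pos.trans_le (ha n)
  have key : ∀ M, (∏ n ∈ Finset.Ico 1 (M + 1), (a n * a (n + 1))) * a (M + 1)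
      ≤ ∏ n ∈ Finset.Icc 1 (M + 1), a n ^ 2 := by
    intro M
    induction M with
    | zero => simpa using by nlinarith [ha 1]
    | succ M ih =>
      rw [Finset.prod_Ico_succ_top (by omega), Finset.prod_Icc_succ_top (by omega)]
      calc _ = ((∏ n ∈ Finset.Ico 1 (M + 1), (a n * a (n + 1))) * a (M + 1))
            * a (M + 1 + 1) ^ 2 := by ring
        _ ≤ _ := by gcongr
  rcases N with _ | M
  · simp
  · refine le_trans ?_ (key M)
    exact le_mul_of_one_le_right (Finset.prod_nonneg fun n _ => (mul_pos (hpos _) (hpos _)).le)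
      (ha _)

/-- Each gap is at most `(1 + |x_n|) (1 + |x_{n+1}|)`, so the gaps can be absorbed into the
densities. -/
lemma objective_le {f : ℝ → ℝ} (hf0 : ∀ t, 0 ≤ f t) {l N : ℕ} {r : ℕ → ℝ} {S : ℕ → ℕ}
    {x : ℕ → ℝ} (h : WAdm l N r S x) :
    objective f N x ≤ ∏ n ∈ Finset.Icc 1 N, (f (x n) * (1 + |x n|) ^ 2) := by
  rw [objective, Finset.prod_mul_distrib]
  refine mul_le_mul_of_nonneg_left ?_ (Finset.prod_nonneg fun n _ => hf0 _)
  refine le_trans ?_ (prod_consecutive_le (fun n => 1 + |x n|) (fun n => by simp) N)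
  refine Finset.prod_le_prod (fun n hn => ?_) (fun n hn => ?_)
  · obtain ⟨h1, h2⟩ := Finset.mem_Ico.1 hn
    exact sub_nonneg.2 (h.1 n h1 h2)
  · have h1 := le_abs_self (x (n + 1))
    have h2 := neg_le_abs (x n)
    nlinarith [mul_nonneg (abs_nonneg (x n)) (abs_nonneg (x (n + 1)))]

/-- The objective is small as soon as one of the points is far from the origin. -/
lemma exists_radius {f : ℝ → ℝ} (hf : Continuous f) (hf0 : ∀ t, 0 ≤ f t)
    (hdec : Tendsto (fun t => f t * (1 + |t|) ^ 2) (cocompact ℝ) (nhds 0))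
    (l N : ℕ) (r : ℕ → ℝ) (S : ℕ → ℕ) {ε : ℝ} (hε : 0 < ε) :
    ∃ R : ℝ, 0 ≤ R ∧ ∀ x, WAdm l N r S x → ∀ m ∈ Finset.Icc 1 N, R < |x m| →
      objective f N x < ε := by
  have htail : ∀ δ > 0, ∃ R : ℝ, 0 ≤ R ∧ ∀ t : ℝ, R < |t| → f t * (1 + |t|) ^ 2 < δ := by
    intro δ hδ
    have := hdec.eventually_lt_const hδ
    rw [Filter.Eventually, Filter.mem_cocompact] at this
    obtain ⟨K, hK, hsub⟩ := this
    obtain ⟨R, hR⟩ := hK.isBounded.exists_norm_le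
    refine ⟨max R 0, le_max_right _ _, fun t ht => hsub fun htK => ?_⟩
    exact absurd ((hR t htK).trans (le_max_left R 0)) (not_le.2 ht)
  have hg0 : ∀ t, 0 ≤ f t * (1 + |t|) ^ 2 := fun t => mul_nonneg (hf0 t) (by positivity)
  obtain ⟨B, hB1, hB⟩ : ∃ B : ℝ, 1 ≤ B ∧ ∀ t, f t * (1 + |t|) ^ 2 ≤ B := by
    obtain ⟨R, _, hR⟩ := htail 1 one_pos
    obtain ⟨C, hC⟩ := (isCompact_Icc (a := -R) (b := R)).exists_bound_of_continuousOn
      (f := fun t => f t * (1 + |t|) ^ 2) (by fun_prop)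
    refine ⟨max 1 C, le_max_left _ _, fun t => ?_⟩
    rcases le_or_gt |t| R with h | h
    · exact (le_abs_self _).trans ((hC t (abs_le.1 h)).trans (le_max_right _ _))
    · exact (hR t h).le.trans (le_max_left _ _)
  have hBpos : 0 < B := one_pos.trans_le hB1
  obtain ⟨R, hR0, hR⟩ := htail (ε / B ^ N) (by positivity)
  refine ⟨R, hR0, fun x hx m hm hxm => ?_⟩
  refine (objective_le hf0 hx).trans_lt ?_
  rw [← Finset.mul_prod_erase _ _ hm]
  have herase : ∏ n ∈ (Finset.Icc 1 N).erase m, (f (x n) * (1 + |x n|) ^ 2) ≤ B ^ N := by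
    calc _ ≤ ∏ n ∈ (Finset.Icc 1 N).erase m, B :=
          Finset.prod_le_prod (fun n _ => hg0 _) (fun n _ => hB _)
      _ = B ^ ((Finset.Icc 1 N).erase m).card := by simp
      _ ≤ B ^ N := pow_le_pow_right₀ hB1 ((Finset.card_erase_le).trans (by simp))
  calc _ ≤ f (x m) * (1 + |x m|) ^ 2 * B ^ N := mul_le_mul_of_nonneg_left herase (hg0 _)
    _ < ε / B ^ N * B ^ N := mul_lt_mul_of_pos_right (hR _ hxm) (by positivity)
    _ = ε := by field_simp

/-- The logarithmic partial derivative of the objective is the defect in the MIW recursion. -/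
lemma logDeriv_objective {f : ℝ → ℝ} (hf : Differentiable ℝ f) {N : ℕ} {x : ℕ → ℝ}
    (hfx : ∀ n ∈ Finset.Icc 1 N, f (x n) ≠ 0) (hx : ∀ n, 1 ≤ n → n < N → x n < x (n + 1))
    {n : ℕ} (hn : n ∈ Finset.Icc 1 N) :
    logDeriv (fun t => objective f N (Function.update x n t)) (x n)
      = logDeriv f (x n) - gapTerm N x n := by
  have hu : ∀ m, HasDerivAt (fun t => Function.update x n t m) (if m = n then 1 else 0) (x n) := by
    intro m
    split_ifs with h
    · subst h; simpa using hasDerivAt_id' (x m)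
    · simpa [Function.update_of_ne h] using hasDerivAt_const (x n) (x m)
  have hgap : ∀ m ∈ Finset.Ico 1 N, x (m + 1) - x m ≠ 0 := fun m hm => by
    obtain ⟨h1, h2⟩ := Finset.mem_Ico.1 hm
    exact (sub_pos.2 (hx m h1 h2)).ne'
  have hd1 : ∀ m ∈ Finset.Icc 1 N,
      DifferentiableAt ℝ (fun t => f (Function.update x n t m)) (x n) := fun m _ =>
    (hf _).comp (x n) (hu m).differentiableAt
  have hd2 : ∀ m ∈ Finset.Ico 1 N, DifferentiableAt ℝ
      (fun t => Function.update x n t (m + 1) - Function.update x n t m) (x n) := fun m _ =>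
    ((hu (m + 1)).sub (hu m)).differentiableAt
  have h1 : ∀ m, logDeriv (fun t => f (Function.update x n t m)) (x n)
      = if m = n then logDeriv f (x m) else 0 := by
    intro m
    have := logDeriv_comp (x := x n) (f := f) (g := fun t => Function.update x n t m)
      (hf _) (hu m).differentiableAt
    rw [(hu m).deriv] at this
    simp only [Function.update_eq_self] at this
    rw [show (fun t => f (Function.update x n t m)) = f ∘ fun t => Function.update x n t m from rfl,
      this]
    split_ifs <;> simp
  have h2 : ∀ m, logDeriv (fun t => Function.update x n t (m + 1) - Function.update x n t m) (x n)
      = (if m + 1 = n then 1 / (x (m + 1) - x m) else 0)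
        - (if m = n then 1 / (x (m + 1) - x m) else 0) := by
    intro m
    rw [logDeriv_apply, ((hu (m + 1)).fun_sub (hu m)).deriv]
    simp only [Function.update_eq_self, sub_div]
    split_ifs <;> simp
  unfold objective
  rw [logDeriv_mul (f := fun t => ∏ m ∈ Finset.Icc 1 N, f (Function.update x n t m))
      (g := fun t => ∏ m ∈ Finset.Ico 1 N,
        (Function.update x n t (m + 1) - Function.update x n t m)) (x n)
      (by simpa [Finset.prod_ne_zero_iff] using hfx)
      (by simpa only [Function.update_eq_self, Finset.prod_ne_zero_iff] using hgap)
      (DifferentiableAt.fun_finsetProd hd1) (DifferentiableAt.fun_finsetProd hd2),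
    logDeriv_prod (f := fun m t => f (Function.update x n t m))
      (by simpa using hfx) hd1,
    logDeriv_prod (f := fun m t => Function.update x n t (m + 1) - Function.update x n t m)
      (by simpa only [Function.update_eq_self] using hgap) hd2]
  simp only [h1, h2, Finset.sum_sub_distrib, Finset.sum_ite_eq', hn, if_true]
  obtain ⟨hn1, hn2⟩ := Finset.mem_Icc.1 hn
  obtain ⟨k, rfl⟩ : ∃ k, n = k + 1 := ⟨n - 1, by omega⟩
  have h3 : ∀ m, (m + 1 = k + 1) = (m = k) := by intro m; simp
  simp only [h3, Finset.sum_ite_eq', gapTerm, Finset.mem_Ico, Nat.add_sub_cancel]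
  have e1 : (1 ≤ k ∧ k < N) = (1 < k + 1) := by
    apply propext; omega
  have e2 : (1 ≤ k + 1 ∧ k + 1 < N) = (k + 1 < N) := by
    apply propext; omega
  simp only [e1, e2]
  ring

/-- The objective attains a positive maximum over the closed configurations; positivity puts the
maximizer in the interior, where all partial derivatives vanish. -/
lemma exists_critical {f : ℝ → ℝ} (hf : Differentiable ℝ f) (hf0 : ∀ t, 0 ≤ f t)
    (hdec : Tendsto (fun t => f t * (1 + |t|) ^ 2) (cocompact ℝ) (nhds 0))
    {l N : ℕ} {r : ℕ → ℝ} {S : ℕ → ℕ} (hz : ∀ i ∈ Finset.Icc 1 l, f (r i) = 0)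
    {x₀ : ℕ → ℝ} (hx₀ : Adm l N r S x₀) (hpos : 0 < objective f N x₀) :
    ∃ x, Adm l N r S x ∧ ∀ n ∈ Finset.Icc 1 N, gapTerm N x n = logDeriv f (x n) := by
  obtain ⟨R, hR0, hR⟩ := exists_radius hf.continuous hf0 hdec l N r S hpos
  -- The half-width depends on the coordinate so that the box contains `x₀`.
  set box : Set (ℕ → ℝ) :=
    Set.pi Set.univ fun n => Set.Icc (-(R + |x₀ n|)) (R + |x₀ n|) with hbox
  have hcomp : IsCompact (box ∩ {x | WAdm l N r S x}) :=
    (isCompact_univ_pi fun n => isCompact_Icc).inter_right (isClosed_wadm l N r S)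
  have hcont : Continuous (objective f N) := by
    have := hf.continuous
    unfold objective
    fun_prop
  have hx₀box : x₀ ∈ box := fun n _ => abs_le.1 (by linarith)
  obtain ⟨x, ⟨hxbox, hxw⟩, hmax⟩ := hcomp.exists_isMaxOn ⟨x₀, hx₀box, hx₀.wadm⟩ hcont.continuousOn
  have hge : objective f N x₀ ≤ objective f N x := hmax ⟨hx₀box, hx₀.wadm⟩
  have hne : objective f N x ≠ 0 := (hpos.trans_le hge).ne'
  have hne1 : ∀ n ∈ Finset.Icc 1 N, f (x n) ≠ 0 :=
    Finset.prod_ne_zero_iff.1 (left_ne_zero_of_mul hne)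
  have hne2 : ∀ n ∈ Finset.Ico 1 N, x (n + 1) - x n ≠ 0 :=
    Finset.prod_ne_zero_iff.1 (right_ne_zero_of_mul hne)
  have hadm : Adm l N r S x := by
    refine ⟨fun n h1 h2 => lt_of_le_of_ne (hxw.1 n h1 h2) fun h =>
      hne2 n (Finset.mem_Ico.2 ⟨h1, h2⟩) (by rw [h, sub_self]), fun i hi n hn => ?_⟩
    have hxr : x n ≠ r i := fun h => hne1 n hn (by rw [h, hz i hi])
    exact ⟨fun h => lt_of_le_of_ne ((hxw.2 i hi n hn).1 h) hxr,
      fun h => lt_of_le_of_ne ((hxw.2 i hi n hn).2 h) hxr.symm⟩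
  refine ⟨x, hadm, fun n hn => ?_⟩
  have hloc : IsLocalMax (fun t => objective f N (Function.update x n t)) (x n) := by
    filter_upwards [hadm.eventually_update n] with t ht
    simp only [Function.update_eq_self]
    by_cases hb : Function.update x n t ∈ box
    · exact hmax ⟨hb, ht.wadm⟩
    · simp only [hbox, Set.mem_pi, not_forall] at hb
      obtain ⟨m, _, hm⟩ := hb
      have hmn : m = n := by
        by_contra h
        rw [Function.update_of_ne h] at hm
        exact hm (hxbox m trivial)
      subst hmn
      have hlt : R < |Function.update x m t m| := by
        have := mt abs_le.1 hm
        linarith [abs_nonneg (x₀ m)]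
      exact ((hR _ ht.wadm m hn hlt).le).trans hge
  have hlog := logDeriv_objective hf hne1 hadm.1 hn
  rw [logDeriv_apply, hloc.deriv_eq_zero, zero_div] at hlog
  linarith

/-! ### Solutions as critical points -/

/-- The boundary conditions are the recursion at `n = 1` and `n = N` under the conventions
`x_0 = -∞`, `x_{N+1} = +∞`. -/
lemma isMIW_bc_iff {f : ℝ → ℝ} {N : ℕ} (hN : 2 ≤ N) {x : ℕ → ℝ} :
    (IsMIW f N x ∧ LeftBC f x ∧ RightBC f N x) ↔
      (∀ n, 1 ≤ n → n < N → x n < x (n + 1)) ∧ (∀ n, 1 ≤ n → n ≤ N → f (x n) ≠ 0) ∧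
      ∀ n ∈ Finset.Icc 1 N, gapTerm N x n = logDeriv f (x n) := by
  constructor
  · rintro ⟨⟨h1, h2, h3⟩, h4, h5⟩
    refine ⟨h1, h2, fun n hn => ?_⟩
    obtain ⟨hn1, hn2⟩ := Finset.mem_Icc.1 hn
    rw [gapTerm, logDeriv_apply]
    rcases hn1.eq_or_lt with rfl | hn1
    · rw [if_pos (by omega), if_neg (by omega), sub_zero]; exact h4
    · rcases hn2.eq_or_lt with rfl | hn2
      · rw [if_neg (by omega), if_pos hn1, zero_sub]; exact h5
      · rw [if_pos hn2, if_pos hn1]; exact h3 n hn1 hn2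
  · rintro ⟨h1, h2, h3⟩
    refine ⟨⟨h1, h2, fun n hn1 hn2 => ?_⟩, ?_, ?_⟩
    · have := h3 n (Finset.mem_Icc.2 ⟨hn1.le, hn2.le⟩)
      rwa [gapTerm, if_pos hn2, if_pos hn1] at this
    · have := h3 1 (Finset.mem_Icc.2 ⟨le_rfl, by omega⟩)
      rwa [gapTerm, if_pos (by omega), if_neg (by omega), sub_zero] at this
    · have := h3 N (Finset.mem_Icc.2 ⟨by omega, le_rfl⟩)
      rwa [gapTerm, if_neg (by omega), if_pos (by omega), zero_sub] at this

theorem exists_unique_MIW_sequence (l : ℕ) (c : ℝ) (hc : IsNormalizing l c)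
    (r : ℕ → ℝ) (hr : ZeroEnum (heFun l c) l r)
    (Nk : ℕ → ℕ) (hNk : ∀ k ≤ l, 1 ≤ Nk k)
    (N : ℕ) (hN : N = ∑ k ∈ Finset.range (l + 1), Nk k)
    (hN2 : l = 0 → 2 ≤ N) :
    ∃ x : ℕ → ℝ,
      (IsMIW (heFun l c) N x ∧ LeftBC (heFun l c) x ∧ RightBC (heFun l c) N x ∧
        ∀ k ≤ l, regionCount l r N x k = Nk k) ∧
      ∀ y : ℕ → ℝ,
        IsMIW (heFun l c) N y → LeftBC (heFun l c) y → RightBC (heFun l c) N y →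
        (∀ k ≤ l, regionCount l r N y k = Nk k) →
        ∀ n, 1 ≤ n → n ≤ N → y n = x n := by
  set f := heFun l c with hfdef
  set S : ℕ → ℕ := fun i => ∑ k ∈ Finset.range i, Nk k with hSdef
  have hN2' : 2 ≤ N := by
    rcases Nat.eq_zero_or_pos l with h | h
    · exact hN2 h
    · have : ∑ k ∈ Finset.range (l + 1), 1 ≤ ∑ k ∈ Finset.range (l + 1), Nk k :=
        Finset.sum_le_sum fun k hk => hNk k (by simp at hk; omega)
      simp at this
      omega
  have hSmono : Monotone S := fun i j hij =>
    Finset.sum_le_sum_of_subset (Finset.range_subset_range.2 hij)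
  have hf : f = fun t => c * (∏ i ∈ Finset.Icc 1 l, (t - r i)) ^ 2 * Real.exp (-t ^ 2 / 2) :=
    funext (heFun_eq_prod l c hc.1 r hr)
  have hc0 : 0 < c := hc.1
  have hzero : ∀ t, f t = 0 ↔ ∃ i ∈ Finset.Icc 1 l, r i = t := by
    intro t
    have := Set.ext_iff.1 hr.2 t
    simpa [Set.mem_image] using this
  have hlog : ∀ x, Adm l N r S x → ∀ n ∈ Finset.Icc 1 N,
      logDeriv f (x n) = 2 * ∑ i ∈ Finset.Icc 1 l, 1 / (x n - r i) - x n := by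
    intro x hx n hn
    rw [hf]
    exact logDeriv_prodGaussian l c hc0 r _ (hx.ne hn)
  have hfne : ∀ x, Adm l N r S x → ∀ n ∈ Finset.Icc 1 N, f (x n) ≠ 0 := by
    intro x hx n hn h
    obtain ⟨i, hi, hri⟩ := (hzero _).1 h
    exact hx.ne hn i hi hri.symm
  have hf0 : ∀ t, 0 ≤ f t := fun t => by rw [hf]; positivity
  obtain ⟨x₀, hx₀⟩ := exists_adm l N r S hSmono hr.1
  have hpos : 0 < objective f N x₀ := by
    refine mul_pos (Finset.prod_pos fun n hn => ?_) (Finset.prod_pos fun n hn => ?_)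
    · exact lt_of_le_of_ne (hf0 _) (hfne x₀ hx₀ n hn).symm
    · obtain ⟨h1, h2⟩ := Finset.mem_Ico.1 hn
      exact sub_pos.2 (hx₀.1 n h1 h2)
  obtain ⟨x, hx, hxe⟩ := exists_critical (f := f) (by rw [hf]; fun_prop) hf0
    (by rw [hf]; exact tendsto_prodGaussian l c hc0 r)
    (fun i hi => (hzero _).2 ⟨i, hi, rfl⟩) hx₀ hpos
  have hxMIW := (isMIW_bc_iff (f := f) hN2').2
    ⟨hx.1, fun n h1 h2 => hfne x hx n (Finset.mem_Icc.2 ⟨h1, h2⟩), hxe⟩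
  refine ⟨x, ⟨hxMIW.1, hxMIW.2.1, hxMIW.2.2, fun k hk => hx.regionCount_eq hN hk⟩, ?_⟩
  intro y hy1 hy2 hy3 hycount n hn1 hn2
  have hn : n ∈ Finset.Icc 1 N := Finset.mem_Icc.2 ⟨hn1, hn2⟩
  obtain ⟨hystep, hyne, hye⟩ := (isMIW_bc_iff (f := f) hN2').1 ⟨hy1, hy2, hy3⟩
  have hy : Adm l N r S y := by
    refine adm_of_regionCount hr.1 hystep (fun m hm i hi h => ?_) hycount
    obtain ⟨hm1, hm2⟩ := Finset.mem_Icc.1 hm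
    exact hyne m hm1 hm2 ((hzero _).2 ⟨i, hi, h.symm⟩)
  have hxe' := fun m hm => (hxe m hm).trans (hlog x hx m hm)
  have hye' := fun m hm => (hye m hm).trans (hlog y hy m hm)
  exact le_antisymm (adm_le hx hy hxe' hye' n hn) (adm_le hy hx hye' hxe' n hn)
end
end

section
/- Let f be the higher energy function of order ℓ ≥ 0 and, for each N, let (x_n^{(N)})_{n=1}^N be the unique MIW sequence of f satisfying the left boundary condition at −∞ and the right boundary condition at +∞ with N_k(N) ≥ 1 points in each region R_k, where N_k(N) → ∞ as N → ∞ for every 0 ≤ k ≤ ℓ. Then for every t ∈ ℝ that is not a zero of f, the partial derivative ∂H/∂x_{n(t)}, evaluated at the point (x_1^{(N)}, …, x_N^{(N)}), converges to 0 as N → ∞. -/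
/-!
Write `a_m = 1 / (x_{m+1} - x_m)`, with `a_0 = a_N = 0`, and `φ = f' / f`. The recursion together
with both boundary conditions reads `a_m - a_{m-1} = φ(x_m)` for `1 ≤ m ≤ N`. Since the Hermite
polynomial `p` has degree `l` and `l` distinct real zeros, `φ(x) = 2 ∑ 1 / (x - r_i) - x`, which is
decreasing on each region.

*The gaps near `t` vanish.* Suppose that the gap containing `t` has `a ≤ C`. To the right of `t`
inside the region of `t`, `a` grows by at most a constant `K` per step, so `a ≤ K (j + 1)` after `j`
steps; the gaps dominate a harmonic series and the points move beyond any prescribed `q` in a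
bounded number of steps. Choosing `q` with `φ(q) < 0`, `a` then falls by at least `-φ(q)` per step
while staying nonnegative, which bounds the number of remaining points. The same holds on the
left by reflection. As the number of points in the region tends to infinity, `a_{n(t)} → ∞`. Hence
`x_n, x_{n+1} → t`, and `x_{n-1} → t` because `a_{n-1} = a_n - φ(x_n)` (`step_bound`,
`tendsto_recGap`).

*The derivative of the energy.* For `n = n(t)`, half the partial derivative is
`x_n - (φ(x_{n+1}) - φ(x_n)) a_n² + (φ(x_n) - φ(x_{n-1})) a_{n-1}²`. Exact divided differences of
`φ` make the terms of order `a` combine into `-φ'(x_n) (a_n - a_{n-1}) = -φ'(x_n) φ(x_n)`, and the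
limit is `t - φ(t) φ'(t) - φ''(t)` (`partialH_score`). This vanishes by Hermite's equation
`p'' - x p' + l p = 0` (`score_identity`).
-/

open MeasureTheory Filter Set

noncomputable section

/-! ### A bound on the number of steps -/

/-- Fix constants `K, κ > 0` and `T, q`. Let `b` grow by at most `K` per step and fall by at least
`κ` per step once `y ≥ q`, where `y` advances by `1 / b`. Since `b j ≤ K (j + 1)`, the harmonic
series carries `y` past `q` within a number of steps depending on the constants only, after which
`b` becomes negative within boundedly many steps. Hence the number of steps is bounded. -/
lemma step_bound (K κ T q : ℝ) (hK : 0 < K) (hκ : 0 < κ) :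
    ∃ M : ℕ, ∀ (b y : ℕ → ℝ) (n : ℕ), b 0 ≤ K →
      (∀ j < n, T ≤ y (j + 1) ∧ 0 ≤ b (j + 1) ∧ b (j + 1) - b j ≤ K ∧
        (q ≤ y (j + 1) → b (j + 1) - b j ≤ -κ)) →
      (∀ j, j + 1 < n → b (j + 1) * (y (j + 2) - y (j + 1)) = 1) → n ≤ M := by
  obtain ⟨J, hJ⟩ := (Filter.tendsto_atTop.1
    Real.tendsto_sum_range_one_div_nat_succ_atTop (K * (q - T) + 1)).exists_forall_of_atTop
  refine ⟨J + 1 + ⌈K * (J + 2) / κ⌉₊, fun b y n hb0 h1 h2 => ?_⟩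
  by_contra! hn
  have hb : ∀ j ≤ n, b j ≤ K * (j + 1) := by
    intro j
    induction j with
    | zero => intro _; simpa using hb0
    | succ j ih =>
      intro hj
      have := (h1 j (by omega)).2.2.1
      have := ih (by omega)
      push_cast; linarith
  have hstep : ∀ j, j + 1 < n → y (j + 1) + 1 / (K * (j + 2)) ≤ y (j + 2) := by
    intro j hj
    have e := h2 j hj
    have hb1 := hb (j + 1) hj.le
    have hb2 := (h1 j (by omega)).2.1
    have hpos : 0 < b (j + 1) := lt_of_le_of_ne hb2 (by rintro h; rw [← h] at e; simp at e)
    have : y (j + 2) - y (j + 1) = 1 / b (j + 1) := by field_simp; linarith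
    have : 1 / (K * (j + 2)) ≤ 1 / b (j + 1) :=
      one_div_le_one_div_of_le hpos (by push_cast at hb1; linarith)
    linarith
  have hy : ∀ j, j < n →
      T + 1 / K * (∑ i ∈ Finset.range (j + 1), 1 / ((i : ℝ) + 1) - 1) ≤ y (j + 1) := by
    intro j
    induction j with
    | zero => intro h; simpa using (h1 0 h).1
    | succ j ih =>
      intro hj
      have e1 := ih (by omega)
      have e2 := hstep j hj
      rw [Finset.sum_range_succ]
      have : 1 / K * (1 / (((j + 1 : ℕ) : ℝ) + 1)) = 1 / (K * (j + 2)) := by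
        push_cast; field_simp; ring
      linarith [mul_add (1 / K) (∑ i ∈ Finset.range (j + 1), 1 / ((i : ℝ) + 1) - 1)
        (1 / (((j + 1 : ℕ) : ℝ) + 1))]
  have hq : ∀ j, J ≤ j → j < n → q ≤ y (j + 1) := by
    intro j hj hjn
    have e1 := hy j hjn
    have e2 := hJ (j + 1) (by omega)
    have : q - T ≤ 1 / K * (∑ i ∈ Finset.range (j + 1), 1 / ((i : ℝ) + 1) - 1) := by
      rw [one_div, inv_mul_eq_div, le_div_iff₀ hK]; linarith
    linarith
  have hdec : ∀ i, J + 1 + i ≤ n → b (J + 1 + i) ≤ K * (J + 2) - κ * i := by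
    intro i
    induction i with
    | zero => intro h; have := hb (J + 1) h; push_cast at this; simp; linarith
    | succ i ih =>
      intro hi
      have e1 := ih (by omega)
      have e2 := (h1 (J + 1 + i) (by omega)).2.2.2 (hq _ (by omega) (by omega))
      have : b (J + 1 + (i + 1)) = b (J + 1 + i + 1) := rfl
      push_cast; linarith
  have e1 := hdec (⌈K * (J + 2) / κ⌉₊ + 1) (by omega)
  have e2 := (h1 (J + 1 + ⌈K * (J + 2) / κ⌉₊) (by omega)).2.1
  have e3 := Nat.le_ceil (K * (J + 2) / κ)
  rw [div_le_iff₀ hκ] at e3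
  have : b (J + 1 + (⌈K * (J + 2) / κ⌉₊ + 1)) = b (J + 1 + ⌈K * (J + 2) / κ⌉₊ + 1) := rfl
  push_cast at e1
  linarith

/-! ### The score as a sum over the zeros -/

/-- The logarithmic derivative `f' / f` of `c ∏ (x - r i)² e^{-x²/2}`. -/
def score (I : Finset ℕ) (r : ℕ → ℝ) (x : ℝ) : ℝ := 2 * ∑ i ∈ I, 1 / (x - r i) - x

/-- The score is decreasing on intervals free of the `r i`. -/
lemma score_anti (I : Finset ℕ) (r : ℕ → ℝ) {u v : ℝ} (huv : u ≤ v)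
    (h : ∀ i ∈ I, r i < u ∨ v < r i) : score I r v ≤ score I r u := by
  unfold score
  have : ∑ i ∈ I, 1 / (v - r i) ≤ ∑ i ∈ I, 1 / (u - r i) := by
    refine Finset.sum_le_sum fun i hi => ?_
    rcases h i hi with h | h
    · exact one_div_le_one_div_of_le (by linarith) (by linarith)
    · exact one_div_le_one_div_of_neg_of_le (by linarith) (by linarith)
  linarith

lemma score_neg (I : Finset ℕ) (r : ℕ → ℝ) (x : ℝ) :
    score I (fun i => -r i) (-x) = -score I r x := by
  have : ∀ i, 1 / (-x - -r i) = -(1 / (x - r i)) := fun i => by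
    rw [show -x - -r i = -(x - r i) by ring, one_div_neg_eq_neg_one_div]
  simp only [score, this, Finset.sum_neg_distrib]
  ring

lemma exists_score_neg (I : Finset ℕ) (r : ℕ → ℝ) (t : ℝ) :
    ∃ q, t ≤ q ∧ score I r q < 0 := by
  have h : Tendsto (score I r) atTop atBot := by
    have h0 : Tendsto (fun x : ℝ => 2 * ∑ i ∈ I, 1 / (x - r i)) atTop
        (nhds (2 * ∑ i ∈ I, (0 : ℝ))) := by
      refine Tendsto.const_mul _ (tendsto_finsetSum _ fun i _ => ?_)
      simp only [one_div]
      exact tendsto_inv_atTop_zero.comp (tendsto_atTop_add_const_right _ (-r i) tendsto_id)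
    exact h0.add_atBot tendsto_neg_atTop_atBot
  obtain ⟨q, h1, h2⟩ := ((eventually_ge_atTop t).and (h.eventually_lt_atBot 0)).exists
  exact ⟨q, h1, h2⟩

/-! ### Points in one region around a large gap -/

/-- The reciprocal gap `1 / (x (m+1) - x m)`, set to `0` at the two unbounded ends `m = 0` and
`m = N`. -/
def recGap (N : ℕ) (x : ℕ → ℝ) (m : ℕ) : ℝ :=
  if 1 ≤ m ∧ m < N then 1 / (x (m + 1) - x m) else 0

lemma gapTerm_eq (N : ℕ) (x : ℕ → ℝ) {m : ℕ} (h1 : 1 ≤ m) (h2 : m ≤ N) :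
    gapTerm N x m = recGap N x m - recGap N x (m - 1) := by
  obtain ⟨k, rfl⟩ : ∃ k, m = k + 1 := ⟨m - 1, by omega⟩
  have e1 : (1 < k + 1) = (1 ≤ k ∧ k < N) := by apply propext; omega
  simp [gapTerm, recGap, e1]

/-- A strictly increasing sequence `x 1, …, x N` satisfying the recursion with score `ψ` at every
point, the conventions at `±∞` being built into `recGap`. -/
def FullMIW (ψ : ℝ → ℝ) (N : ℕ) (x : ℕ → ℝ) : Prop :=
  (∀ n, 1 ≤ n → n < N → x n < x (n + 1)) ∧
  ∀ n, 1 ≤ n → n ≤ N → recGap N x n - recGap N x (n - 1) = ψ (x n)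

lemma FullMIW.mono {ψ : ℝ → ℝ} {N : ℕ} {x : ℕ → ℝ} (h : FullMIW ψ N x) {i j : ℕ}
    (hi : 1 ≤ i) (hij : i ≤ j) (hj : j ≤ N) : x i ≤ x j := by
  induction j, hij using Nat.le_induction with
  | base => exact le_rfl
  | succ j hij ih => exact (ih (by omega)).trans (h.1 j (by omega) (by omega)).le

lemma FullMIW.recGap_nonneg {ψ : ℝ → ℝ} {N : ℕ} {x : ℕ → ℝ} (h : FullMIW ψ N x) (m : ℕ) :
    0 ≤ recGap N x m := by
  unfold recGap
  split_ifs with hm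
  · have := h.1 m hm.1 hm.2
    exact one_div_nonneg.2 (by linarith)
  · exact le_rfl

lemma FullMIW.recGap_mul {ψ : ℝ → ℝ} {N : ℕ} {x : ℕ → ℝ} (h : FullMIW ψ N x) {m : ℕ}
    (h1 : 1 ≤ m) (h2 : m < N) : recGap N x m * (x (m + 1) - x m) = 1 := by
  have := h.1 m h1 h2
  rw [recGap, if_pos ⟨h1, h2⟩, one_div, inv_mul_cancel₀ (by linarith)]

/-- If the gap at index `n₀` has reciprocal at most `C`, boundedly many points to the right of `t`
lie in the same region as `t`: there the score is at most `score t`, and at most `score q < 0` from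
a point `q` on. No relation between `q` and the region is needed, since `q` is merely a level
that the points would have to pass. -/
lemma count_right (I : Finset ℕ) (r : ℕ → ℝ) (t C : ℝ) : ∃ M : ℕ, ∀ (N : ℕ) (x : ℕ → ℝ) (n₀ : ℕ),
    FullMIW (score I r) N x → recGap N x n₀ ≤ C →
    (∀ j, 1 ≤ j → j ≤ N → n₀ < j → t ≤ x j) →
    ∀ n, n₀ < n → n ≤ N → (∀ i ∈ I, r i < t ∨ x n < r i) → n ≤ n₀ + M := by
  obtain ⟨q, hq1, hq2⟩ := exists_score_neg I r t
  obtain ⟨M, hM⟩ := step_bound (max 1 (max C (score I r t))) (-score I r q) t q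
    (lt_max_of_lt_left one_pos) (by linarith)
  refine ⟨M, fun N x n₀ hB hC ht n hn hnN hr => ?_⟩
  have := hM (fun j => recGap N x (n₀ + j)) (fun j => x (n₀ + j)) (n - n₀)
    (hC.trans ((le_max_left _ _).trans (le_max_right _ _))) ?_ ?_
  · omega
  · intro j hj
    have e1 : t ≤ x (n₀ + (j + 1)) := ht _ (by omega) (by omega) (by omega)
    have e2 : x (n₀ + (j + 1)) ≤ x n := hB.mono (by omega) (by omega) hnN
    have e3 : recGap N x (n₀ + (j + 1)) - recGap N x (n₀ + j) = score I r (x (n₀ + (j + 1))) :=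
      hB.2 (n₀ + (j + 1)) (by omega) (by omega)
    refine ⟨e1, hB.recGap_nonneg _, ?_, fun h => ?_⟩
    · simp only [e3]
      refine (score_anti I r e1 fun i hi => ?_).trans ((le_max_right _ _).trans (le_max_right _ _))
      exact (hr i hi).imp id fun h => by linarith
    · simp only [e3, neg_neg]
      exact score_anti I r h fun i hi => (hr i hi).imp (fun h => by linarith) fun h => by linarith
  · intro j hj
    exact hB.recGap_mul (m := n₀ + (j + 1)) (by omega) (by omega)

/-- The mirror image of `count_right` under `x ↦ -x`. -/
lemma count_left (I : Finset ℕ) (r : ℕ → ℝ) (t C : ℝ) : ∃ M : ℕ, ∀ (N : ℕ) (x : ℕ → ℝ) (n₀ : ℕ),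
    n₀ ≤ N → FullMIW (score I r) N x → recGap N x n₀ ≤ C →
    (∀ j, 1 ≤ j → j ≤ n₀ → x j ≤ t) →
    ∀ n, 1 ≤ n → n ≤ n₀ → (∀ i ∈ I, r i < x n ∨ t < r i) → n₀ < n + M := by
  obtain ⟨q, hq1, hq2⟩ := exists_score_neg I (fun i => -r i) (-t)
  obtain ⟨M, hM⟩ := step_bound (max 1 (max C (-score I r t))) (-score I (fun i => -r i) q) (-t) q
    (lt_max_of_lt_left one_pos) (by linarith)
  refine ⟨M, fun N x n₀ hN hB hC ht n hn hnN hr => ?_⟩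
  have := hM (fun j => recGap N x (n₀ - j)) (fun j => -x (n₀ + 1 - j)) (n₀ + 1 - n)
    (hC.trans ((le_max_left _ _).trans (le_max_right _ _))) ?_ ?_
  · omega
  · intro j hj
    have a1 : n₀ + 1 - (j + 1) = n₀ - j := by omega
    have a2 : n₀ - (j + 1) = n₀ - j - 1 := by omega
    have e1 : x (n₀ - j) ≤ t := ht _ (by omega) (by omega)
    have e2 : x n ≤ x (n₀ - j) := hB.mono (by omega) (by omega) (by omega)
    have e3 := hB.2 (n₀ - j) (by omega) (by omega)
    have e4 : recGap N x (n₀ - j - 1) - recGap N x (n₀ - j) = -score I r (x (n₀ - j)) := by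
      linarith
    simp only [a1, a2, e4]
    refine ⟨by linarith, hB.recGap_nonneg _, ?_, fun h => ?_⟩
    · refine le_trans (neg_le_neg ?_) ((le_max_right C _).trans (le_max_right 1 _))
      exact score_anti I r e1 fun i hi => (hr i hi).imp (fun h => by linarith) id
    · rw [neg_neg, ← score_neg]
      exact score_anti I _ h fun i hi =>
        (hr i hi).symm.imp (fun h => by linarith) fun h => by linarith
  · intro j hj
    have a1 : n₀ + 1 - (j + 1) = n₀ - (j + 1) + 1 := by omega
    have a2 : n₀ + 1 - (j + 2) = n₀ - (j + 1) := by omega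
    have := hB.recGap_mul (m := n₀ - (j + 1)) (by omega) (by omega)
    simp only [a1, a2]
    linarith

/-! ### Hermite polynomials -/

open Polynomial in
lemma derivative_hermite_succ (n : ℕ) :
    derivative (hermite (n + 1)) = ((n : ℤ[X]) + 1) * hermite n := by
  induction n with
  | zero => simp
  | succ n ih =>
    have h : derivative (derivative (hermite (n + 1))) =
        ((n : ℤ[X]) + 1) * derivative (hermite n) := by
      rw [ih]; simp [derivative_mul]
    rw [hermite_succ (n + 1), derivative_sub, derivative_mul, h, ih, derivative_X]
    have := hermite_succ n
    push_cast
    linear_combination (n + 1 : ℤ[X]) * this.symm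

open Polynomial in
/-- Hermite's differential equation `p'' - x p' + n p = 0`. -/
lemma hermite_ode (n : ℕ) :
    derivative (derivative (hermite n)) - X * derivative (hermite n) + (n : ℤ[X]) * hermite n
      = 0 := by
  have h1 := derivative_hermite_succ n
  rw [hermite_succ, derivative_sub, derivative_mul, derivative_X] at h1
  linear_combination -h1

/-- The Hermite polynomial with real coefficients. -/
def hermiteR (l : ℕ) : Polynomial ℝ := (Polynomial.hermite l).map (Int.castRingHom ℝ)

lemma hermiteFun_eq (l : ℕ) (x : ℝ) : hermiteFun l x = (hermiteR l).eval x := by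
  have h := Polynomial.hermite_eq_deriv_gaussian' l x
  have e : (fun t : ℝ => Real.exp (-t ^ 2 / 2)) = fun y => Real.exp (-(y ^ 2 / 2)) := by
    funext t; rw [neg_div]
  rw [hermiteFun, iteratedDeriv_eq_iterate, e, hermiteR, Polynomial.eval_map,
    ← algebraMap_int_eq, ← Polynomial.aeval_def, h]
  ring

lemma heFun_eq_zero_iff {l : ℕ} {c : ℝ} (hc : 0 < c) (x : ℝ) :
    heFun l c x = 0 ↔ (hermiteR l).eval x = 0 := by
  simp [heFun, hermiteFun_eq, hc.ne']

lemma hermiteR_ne_zero (l : ℕ) : hermiteR l ≠ 0 :=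
  ((Polynomial.hermite_monic l).map _).ne_zero

lemma natDegree_hermiteR (l : ℕ) : (hermiteR l).natDegree = l := by
  rw [hermiteR, (Polynomial.hermite_monic l).natDegree_map, Polynomial.natDegree_hermite]

/-- The `l` distinct zeros `r 1, …, r l` exhaust the roots of a polynomial of degree `l`. -/
lemma roots_hermiteR {l : ℕ} {c : ℝ} (hc : 0 < c) {r : ℕ → ℝ} (hr : ZeroEnum (heFun l c) l r) :
    (hermiteR l).roots = (Finset.Icc 1 l).val.map r := by
  symm
  apply Multiset.eq_of_le_of_card_le
  · rw [Multiset.le_iff_subset]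
    · intro y hy
      obtain ⟨i, hi, rfl⟩ := Multiset.mem_map.1 hy
      have hi' : i ∈ Set.Icc 1 l := by simpa using hi
      rw [Polynomial.mem_roots (hermiteR_ne_zero l), Polynomial.IsRoot.def,
        ← heFun_eq_zero_iff hc]
      have : r i ∈ {y : ℝ | heFun l c y = 0} := hr.2 ▸ ⟨i, hi', rfl⟩
      exact this
    · refine Multiset.Nodup.map_on (fun i hi j hj hij => ?_) (Finset.Icc 1 l).nodup
      simp only [Finset.mem_val, Finset.mem_Icc] at hi hj
      rcases lt_trichotomy i j with h | h | h
      · exact absurd hij (hr.1 i j hi.1 h hj.2).ne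
      · exact h
      · exact absurd hij (hr.1 j i hj.1 h hi.2).ne'
  · refine (Polynomial.card_roots' _).trans ?_
    simp [natDegree_hermiteR]

lemma logDeriv_hermiteR {l : ℕ} {c : ℝ} (hc : 0 < c) {r : ℕ → ℝ} (hr : ZeroEnum (heFun l c) l r)
    {x : ℝ} (hx : (hermiteR l).eval x ≠ 0) :
    (hermiteR l).derivative.eval x =
      (∑ i ∈ Finset.Icc 1 l, 1 / (x - r i)) * (hermiteR l).eval x := by
  have hs : (hermiteR l).Splits := by
    rw [Polynomial.splits_iff_card_roots, roots_hermiteR hc hr]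
    simp [natDegree_hermiteR]
  have := hs.eval_derivative_div_eval_of_ne_zero hx
  rw [roots_hermiteR hc hr, Multiset.map_map] at this
  rw [div_eq_iff hx] at this
  rw [this]
  rfl

lemma score_eq {l : ℕ} {c : ℝ} (hc : 0 < c) {r : ℕ → ℝ} (hr : ZeroEnum (heFun l c) l r)
    {x : ℝ} (hx : heFun l c x ≠ 0) :
    deriv (heFun l c) x / heFun l c x = score (Finset.Icc 1 l) r x := by
  have hp : (hermiteR l).eval x ≠ 0 := fun h => hx ((heFun_eq_zero_iff hc x).2 h)
  have hd : HasDerivAt (heFun l c) (c * (2 * (hermiteR l).eval x *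
      (hermiteR l).derivative.eval x) * Real.exp (-x ^ 2 / 2) +
      c * (hermiteR l).eval x ^ 2 * (Real.exp (-x ^ 2 / 2) * (-x))) x := by
    have h1 : HasDerivAt (fun y : ℝ => Real.exp (-y ^ 2 / 2)) (Real.exp (-x ^ 2 / 2) * (-x)) x := by
      have := (((hasDerivAt_id x).fun_pow 2).fun_neg.div_const 2).exp
      refine this.congr_deriv ?_
      simp only [id]
      ring
    have h2 := (((hermiteR l).hasDerivAt x).fun_pow 2).const_mul c
    have h3 := h2.fun_mul h1
    have e : heFun l c = fun y => c * (hermiteR l).eval y ^ 2 * Real.exp (-y ^ 2 / 2) := by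
      funext y; rw [heFun, hermiteFun_eq]
    rw [e]
    refine h3.congr_deriv ?_
    push_cast
    ring
  rw [hd.deriv, heFun, hermiteFun_eq, logDeriv_hermiteR hc hr hp, score]
  have := Real.exp_pos (-x ^ 2 / 2)
  field_simp
  ring

lemma hasDerivAt_sum_inv_pow (I : Finset ℕ) (r : ℕ → ℝ) (n : ℕ) {x : ℝ}
    (hx : ∀ i ∈ I, x ≠ r i) :
    HasDerivAt (fun y => ∑ i ∈ I, 1 / (y - r i) ^ (n + 1))
      (-(n + 1) * ∑ i ∈ I, 1 / (x - r i) ^ (n + 2)) x := by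
  rw [Finset.mul_sum]
  refine HasDerivAt.fun_sum fun i hi => ?_
  have h0 : x - r i ≠ 0 := sub_ne_zero.2 (hx i hi)
  have := (((hasDerivAt_id x).sub_const (r i)).fun_pow (n + 1)).fun_inv (pow_ne_zero _ h0)
  simp only [one_div]
  refine this.congr_deriv ?_
  simp only [id, Nat.add_sub_cancel]
  push_cast
  field_simp
  ring

/-- The identity `φ φ' + φ'' = x` for `φ = f' / f`, written in terms of the power sums of
`1 / (x - r i)`: it is Hermite's equation in Riccati form `u' + u² - x u + l = 0`,
`u = p' / p`, differentiated once. -/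
lemma score_identity {l : ℕ} {c : ℝ} (hc : 0 < c) {r : ℕ → ℝ} (hr : ZeroEnum (heFun l c) l r)
    {t : ℝ} (ht : heFun l c t ≠ 0) :
    t + score (Finset.Icc 1 l) r t * (1 + 2 * ∑ i ∈ Finset.Icc 1 l, 1 / (t - r i) ^ 2)
      - 4 * ∑ i ∈ Finset.Icc 1 l, 1 / (t - r i) ^ 3 = 0 := by
  set p := hermiteR l with hp
  set I := Finset.Icc 1 l with hI
  have hopen : IsOpen {x : ℝ | p.eval x ≠ 0} := isOpen_ne_fun p.continuous continuous_const
  have htp : p.eval t ≠ 0 := fun h => ht ((heFun_eq_zero_iff hc t).2 h)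
  have hne : ∀ x : ℝ, p.eval x ≠ 0 → ∀ i ∈ I, x ≠ r i := by
    rintro x hx i hi rfl
    apply hx
    rw [hp, ← heFun_eq_zero_iff hc]
    have : r i ∈ {y : ℝ | heFun l c y = 0} := hr.2 ▸ ⟨i, by simpa [hI] using hi, rfl⟩
    exact this
  have hS1 : ∀ x : ℝ, p.eval x ≠ 0 → HasDerivAt (fun y => ∑ i ∈ I, 1 / (y - r i))
      (-∑ i ∈ I, 1 / (x - r i) ^ 2) x := fun x hx => by
    have := hasDerivAt_sum_inv_pow I r 0 (hne x hx)
    simpa using this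
  have hode : ∀ x, p.derivative.derivative.eval x - x * p.derivative.eval x + l * p.eval x = 0 := by
    intro x
    have := congrArg (fun q => (q.map (Int.castRingHom ℝ)).eval x) (hermite_ode l)
    simpa [hp, hermiteR, Polynomial.derivative_map] using this
  have hric : ∀ x, p.eval x ≠ 0 → -∑ i ∈ I, 1 / (x - r i) ^ 2 =
      x * (∑ i ∈ I, 1 / (x - r i)) - l - (∑ i ∈ I, 1 / (x - r i)) ^ 2 := by
    intro x hx
    have h1 : HasDerivAt (fun y => p.derivative.eval y)
        ((-∑ i ∈ I, 1 / (x - r i) ^ 2) * p.eval x +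
          (∑ i ∈ I, 1 / (x - r i)) * p.derivative.eval x) x := by
      refine ((hS1 x hx).mul (p.hasDerivAt x)).congr_of_eventuallyEq ?_
      filter_upwards [hopen.mem_nhds hx] with y hy
      exact logDeriv_hermiteR hc hr hy
    have h2 := h1.unique (p.derivative.hasDerivAt x)
    have h3 := logDeriv_hermiteR hc hr hx
    have h4 := hode x
    rw [← hp] at h3
    rw [← h2, h3] at h4
    apply mul_right_cancel₀ hx
    linear_combination h4
  have hd1 : HasDerivAt (fun y => -∑ i ∈ I, 1 / (y - r i) ^ 2)
      (2 * ∑ i ∈ I, 1 / (t - r i) ^ 3) t := by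
    have := (hasDerivAt_sum_inv_pow I r 1 (hne t htp)).fun_neg
    refine this.congr_deriv ?_
    push_cast; ring
  have hd2 : HasDerivAt (fun y => y * (∑ i ∈ I, 1 / (y - r i)) - l - (∑ i ∈ I, 1 / (y - r i)) ^ 2)
      (1 * (∑ i ∈ I, 1 / (t - r i)) + t * (-∑ i ∈ I, 1 / (t - r i) ^ 2)
        - 2 * (∑ i ∈ I, 1 / (t - r i)) * (-∑ i ∈ I, 1 / (t - r i) ^ 2)) t := by
    have := (((hasDerivAt_id t).fun_mul (hS1 t htp)).sub_const (l : ℝ)).fun_sub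
      ((hS1 t htp).fun_pow 2)
    refine this.congr_deriv ?_
    simp
  have heq := hd1.unique (hd2.congr_of_eventuallyEq (by
    filter_upwards [hopen.mem_nhds htp] with y hy using hric y hy))
  rw [score]
  linear_combination -2 * heq

/-! ### The partial derivative of the energy -/

lemma hasDerivAt_recGap_update (N : ℕ) (x : ℕ → ℝ) (n : ℕ) (h2 : 2 ≤ n) (hn : n < N)
    (hx : ∀ i, 1 ≤ i → i < N → x i < x (i + 1)) (m : ℕ) :
    HasDerivAt (fun s => recGap N (Function.update x n s) m)
      ((if m = n then recGap N x n ^ 2 else 0) - (if m + 1 = n then recGap N x (n - 1) ^ 2 else 0))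
      (x n) := by
  by_cases hm : m = n
  · subst hm
    have h0 : x (m + 1) - x m ≠ 0 := by linarith [hx m (by omega) hn]
    have hd := (((hasDerivAt_id (x m)).const_sub (x (m + 1))).fun_inv h0)
    have c : 1 ≤ m ∧ m < N := ⟨by omega, hn⟩
    simp only [recGap, if_pos c, Function.update_self]
    simp only [Function.update_of_ne (show m + 1 ≠ m by omega), one_div]
    refine hd.congr_deriv ?_
    simp
  by_cases hm1 : m + 1 = n
  · subst hm1
    have h0 : x (m + 1) - x m ≠ 0 := by linarith [hx m (by omega) (by omega)]
    have hd := (((hasDerivAt_id (x (m + 1))).sub_const (x m)).fun_inv h0)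
    have c : 1 ≤ m ∧ m < N := ⟨by omega, by omega⟩
    simp only [recGap, if_pos c, Function.update_self, Nat.add_sub_cancel]
    simp only [Function.update_of_ne hm, one_div]
    refine hd.congr_deriv ?_
    simp [neg_div]
  · simp only [recGap, Function.update_of_ne hm, Function.update_of_ne hm1, if_neg hm, if_neg hm1]
    simpa using hasDerivAt_const (x n) _

lemma partialH_eq (N : ℕ) (x : ℕ → ℝ) (n : ℕ) (h2 : 2 ≤ n) (hn : n < N)
    (hx : ∀ i, 1 ≤ i → i < N → x i < x (i + 1)) :
    partialH N x n = 2 * (x n + gapTerm N x n * (recGap N x n ^ 2 + recGap N x (n - 1) ^ 2)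
      - gapTerm N x (n - 1) * recGap N x (n - 1) ^ 2
      - gapTerm N x (n + 1) * recGap N x n ^ 2) := by
  have hA : ∀ m ∈ Finset.Icc 1 N, HasDerivAt (fun s => Function.update x n s m ^ 2)
      (if m = n then 2 * x n else 0) (x n) := by
    intro m _
    by_cases hm : m = n
    · subst hm
      simpa using (hasDerivAt_id (x m)).fun_pow 2
    · simpa [hm] using hasDerivAt_const (x n) (x m ^ 2)
  have hB : ∀ m ∈ Finset.Icc 1 N, HasDerivAt (fun s => gapTerm N (Function.update x n s) m ^ 2)
      ((if m = n then 2 * gapTerm N x n * (recGap N x n ^ 2 + recGap N x (n - 1) ^ 2) else 0)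
        - (if m = n - 1 then 2 * gapTerm N x (n - 1) * recGap N x (n - 1) ^ 2 else 0)
        - (if m = n + 1 then 2 * gapTerm N x (n + 1) * recGap N x n ^ 2 else 0)) (x n) := by
    intro m hm
    rw [Finset.mem_Icc] at hm
    simp only [gapTerm_eq N _ hm.1 hm.2]
    have h := ((hasDerivAt_recGap_update N x n h2 hn hx m).fun_sub
      (hasDerivAt_recGap_update N x n h2 hn hx (m - 1))).fun_pow 2
    refine h.congr_deriv ?_
    rw [Function.update_eq_self, ← gapTerm_eq N _ hm.1 hm.2]
    have a1 : m - 1 + 1 = m := by omega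
    rw [a1]
    rcases eq_or_ne m n with rfl | h
    · split_ifs <;> first | omega | (push_cast; ring)
    rcases eq_or_ne m (n - 1) with rfl | h'
    · split_ifs <;> first | omega | (push_cast; ring)
    rcases eq_or_ne m (n + 1) with rfl | h''
    · split_ifs <;> first | omega | (push_cast; ring)
    · split_ifs <;> first | omega | simp
  have hH : HasDerivAt (fun s => Hfun N (Function.update x n s)) _ (x n) :=
    (HasDerivAt.fun_sum hA).fun_add (HasDerivAt.fun_sum hB)
  rw [partialH, hH.deriv, Finset.sum_sub_distrib, Finset.sum_sub_distrib, Finset.sum_ite_eq',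
    Finset.sum_ite_eq', Finset.sum_ite_eq', Finset.sum_ite_eq',
    if_pos (Finset.mem_Icc.2 ⟨by omega, by omega⟩), if_pos (Finset.mem_Icc.2 ⟨by omega, by omega⟩),
    if_pos (Finset.mem_Icc.2 ⟨by omega, by omega⟩), if_pos (Finset.mem_Icc.2 ⟨by omega, by omega⟩)]
  ring

/-- Exact divided-difference form of the derivative of the energy; it has a finite limit as the
three neighbouring points merge, because the large reciprocal gaps only enter through their
difference `φ (x n)`. -/
lemma partialH_score (I : Finset ℕ) (r : ℕ → ℝ) (N : ℕ) (x : ℕ → ℝ) (n : ℕ)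
    (hB : FullMIW (score I r) N x) (h2 : 2 ≤ n) (hn : n < N)
    (hr : ∀ i ∈ I, x (n - 1) ≠ r i ∧ x n ≠ r i ∧ x (n + 1) ≠ r i) :
    partialH N x n = 2 * (x n + score I r (x n) * (1 + 2 * ∑ i ∈ I, 1 / (x n - r i) ^ 2)
      - 2 * ∑ i ∈ I, 1 / ((x n - r i) ^ 2 * (x (n + 1) - r i))
      - 2 * ∑ i ∈ I, 1 / ((x n - r i) ^ 2 * (x (n - 1) - r i))) := by
  -- The divided difference of the score between two neighbours `u` and `v`.
  have key : ∀ u v a : ℝ, a * (v - u) = 1 → (∀ i ∈ I, u ≠ r i ∧ v ≠ r i) →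
      (score I r v - score I r u) * a ^ 2 = -a * (1 + 2 * ∑ i ∈ I, 1 / (u - r i) ^ 2)
        + 2 * ∑ i ∈ I, 1 / ((u - r i) ^ 2 * (v - r i)) := by
    intro u v a ha hI
    have hsum : (∑ i ∈ I, 1 / (v - r i) - ∑ i ∈ I, 1 / (u - r i)) * a ^ 2 =
        -a * ∑ i ∈ I, 1 / (u - r i) ^ 2 + ∑ i ∈ I, 1 / ((u - r i) ^ 2 * (v - r i)) := by
      rw [← Finset.sum_sub_distrib, Finset.sum_mul, Finset.mul_sum, ← Finset.sum_add_distrib]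
      refine Finset.sum_congr rfl fun i hi => ?_
      have e1 := sub_ne_zero.2 (hI i hi).1
      have e2 := sub_ne_zero.2 (hI i hi).2
      field_simp
      linear_combination (1 - a * (u - r i)) * ha
    simp only [score]
    linear_combination 2 * hsum - a * ha
  have k1 := key (x n) (x (n + 1)) (recGap N x n) (hB.recGap_mul (by omega) hn)
    fun i hi => (hr i hi).2
  have hm := hB.recGap_mul (m := n - 1) (by omega) (by omega)
  rw [show n - 1 + 1 = n by omega] at hm
  have k2 := key (x n) (x (n - 1)) (-recGap N x (n - 1)) (by linarith)
    fun i hi => ⟨(hr i hi).2.1, (hr i hi).1⟩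
  have g0 := hB.2 n (by omega) (by omega)
  rw [partialH_eq N x n h2 hn hB.1, gapTerm_eq N x (by omega : 1 ≤ n) hn.le,
    gapTerm_eq N x (by omega : 1 ≤ n - 1) (by omega),
    gapTerm_eq N x (by omega : 1 ≤ n + 1) (by omega), hB.2 n (by omega) (by omega),
    hB.2 (n - 1) (by omega) (by omega), hB.2 (n + 1) (by omega) (by omega)]
  linear_combination -2 * k1 - 2 * k2
    + 2 * (1 + 2 * ∑ i ∈ I, 1 / (x n - r i) ^ 2) * g0

/-! ### Regions and convergence of the points -/

/-- `nIdx` is the index of the last point that is at most `t`. -/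
lemma exists_nIdx (N : ℕ) (x : ℕ → ℝ) (t : ℝ) (hx : ∀ i, 1 ≤ i → i < N → x i < x (i + 1)) :
    nIdx N x t ≤ N ∧ ∀ j, 1 ≤ j → j ≤ N → (x j ≤ t ↔ j ≤ nIdx N x t) := by
  obtain ⟨n₀, h1, h2⟩ : ∃ n₀ ≤ N, ∀ j, 1 ≤ j → j ≤ N → (x j ≤ t ↔ j ≤ n₀) := by
    induction N with
    | zero => exact ⟨0, le_rfl, fun j _ _ => by omega⟩
    | succ N ih =>
      obtain ⟨n₀, h1, h2⟩ := ih fun i hi hi' => hx i hi (by omega)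
      by_cases hN : x (N + 1) ≤ t
      · refine ⟨N + 1, le_rfl, fun j hj hj' => ⟨fun _ => hj', fun _ => ?_⟩⟩
        rcases Nat.lt_or_ge j (N + 1) with hj2 | hj2
        · rcases Nat.lt_or_ge n₀ N with h3 | h3
          · have e1 : ¬ x N ≤ t := fun h => by
              have := (h2 N (by omega) le_rfl).1 h
              omega
            have := hx N (by omega) (by omega)
            exact absurd (by linarith) e1
          · exact (h2 j hj (by omega)).2 (by omega)
        · rwa [show j = N + 1 by omega]
      · refine ⟨n₀, by omega, fun j hj hj' => ?_⟩
        rcases Nat.lt_or_ge j (N + 1) with hj2 | hj2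
        · exact h2 j hj (by omega)
        · obtain rfl : j = N + 1 := by omega
          exact ⟨fun h => absurd h hN, fun h => by omega⟩
  have : {n : ℕ | n ∈ Set.Icc 1 N ∧ x n ≤ t} = ↑(Finset.Icc 1 n₀) := by
    ext j
    simp only [Set.mem_ofPred_eq, Set.mem_Icc, Finset.coe_Icc]
    exact ⟨fun h => ⟨h.1.1, (h2 j h.1.1 h.1.2).1 h.2⟩,
      fun h => ⟨⟨h.1, by omega⟩, (h2 j h.1 (by omega)).2 h.2⟩⟩
  have hn : nIdx N x t = n₀ := by
    rw [nIdx, this, Set.ncard_coe_finset]; simp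
  rw [hn]
  exact ⟨h1, h2⟩

lemma exists_inRegion {f : ℝ → ℝ} {l : ℕ} {r : ℕ → ℝ} (hr : ZeroEnum f l r) {t : ℝ}
    (ht : f t ≠ 0) : ∃ k ≤ l, InRegion l r k t := by
  classical
  set P : ℕ → Prop := fun k => k = 0 ∨ r k < t
  refine ⟨Nat.findGreatest P l, Nat.findGreatest_le l,
    Nat.findGreatest_spec (P := P) (Nat.zero_le l) (Or.inl rfl), ?_⟩
  by_contra! h
  have hle : Nat.findGreatest P l + 1 ≤ l := by
    have := Nat.findGreatest_le (P := P) l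
    omega
  have h1 := Nat.findGreatest_is_greatest (Nat.lt_succ_self (Nat.findGreatest P l)) hle
  have h2 : t ≠ r (Nat.findGreatest P l + 1) := by
    rintro h3
    apply ht
    have : t ∈ {y : ℝ | f y = 0} := hr.2 ▸ ⟨_, ⟨by omega, hle⟩, h3.symm⟩
    exact this
  exact h1 (Or.inr (lt_of_le_of_ne h.2 h2.symm))

/-- No zero of `f` lies between two points of one region. -/
lemma InRegion.sep {f : ℝ → ℝ} {l : ℕ} {r : ℕ → ℝ} (hr : ZeroEnum f l r) {k : ℕ}
    (hk : k ≤ l) {u v : ℝ}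
    (hu : InRegion l r k u) (hv : InRegion l r k v) : ∀ i ∈ Finset.Icc 1 l, r i < u ∨ v < r i := by
  intro i hi
  rw [Finset.mem_Icc] at hi
  have hmono : ∀ i j, 1 ≤ i → i ≤ j → j ≤ l → r i ≤ r j := fun i j h1 h2 h3 => by
    rcases h2.eq_or_lt with rfl | h
    · exact le_rfl
    · exact (hr.1 i j h1 h h3).le
  rcases Nat.lt_or_ge k i with h | h
  · have := hv.2.resolve_left (by omega)
    exact Or.inr (this.trans_le (hmono _ _ (by omega) (by omega) (by omega)))
  · have := hu.1.resolve_left (by omega)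
    exact Or.inl ((hmono _ _ (by omega) h hk).trans_lt this)

lemma fullMIW_of {l : ℕ} {c : ℝ} (hc : 0 < c) {r : ℕ → ℝ} (hr : ZeroEnum (heFun l c) l r)
    {N : ℕ} (hN : 2 ≤ N) {x : ℕ → ℝ} (h1 : IsMIW (heFun l c) N x) (h2 : LeftBC (heFun l c) x)
    (h3 : RightBC (heFun l c) N x) : FullMIW (score (Finset.Icc 1 l) r) N x := by
  refine ⟨h1.1, fun n hn hnN => ?_⟩
  rw [← score_eq hc hr (h1.2.1 n hn hnN), ← gapTerm_eq N x hn hnN, gapTerm]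
  rcases hn.eq_or_lt with rfl | hn1
  · rw [if_pos (by omega), if_neg (by omega), sub_zero]
    exact h2
  rcases hnN.eq_or_lt with rfl | hnN1
  · rw [if_neg (by omega), if_pos hn1, zero_sub]
    exact h3
  · rw [if_pos hnN1, if_pos hn1]
    exact h1.2.2 n hn1 hnN1

/-- The gap around `t` tends to `0`: if its reciprocal stayed below `C`, then by `count_right` and
`count_left` the region containing `t` would hold boundedly many points. -/
lemma tendsto_recGap {l : ℕ} {f : ℝ → ℝ} {r : ℕ → ℝ} (hr : ZeroEnum f l r)
    {Nk : ℕ → ℕ → ℕ} {x : ℕ → ℕ → ℝ}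
    (hx : ∀ᶠ N in atTop, FullMIW (score (Finset.Icc 1 l) r) N (x N))
    (hcount : ∀ᶠ N in atTop, ∀ k ≤ l, regionCount l r N (x N) k = Nk N k)
    (hNk : ∀ k ≤ l, Tendsto (fun N => Nk N k) atTop atTop) {t : ℝ} (ht : f t ≠ 0) :
    Tendsto (fun N => recGap N (x N) (nIdx N (x N) t)) atTop atTop := by
  obtain ⟨k, hk, hkt⟩ := exists_inRegion hr ht
  rw [tendsto_atTop]
  intro C
  obtain ⟨M₁, hM₁⟩ := count_right (Finset.Icc 1 l) r t C
  obtain ⟨M₂, hM₂⟩ := count_left (Finset.Icc 1 l) r t C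
  filter_upwards [hx, hcount, (hNk k hk).eventually_gt_atTop (M₁ + M₂)] with N hB hcnt hbig
  by_contra! hC
  obtain ⟨hn0, hn⟩ := exists_nIdx N (x N) t hB.1
  set n₀ := nIdx N (x N) t
  have hR := hM₁ N (x N) n₀ hB hC.le fun j h1 h2 h3 => by
    by_contra! h
    have := (hn j h1 h2).1 h.le
    omega
  have hL := hM₂ N (x N) n₀ hn0 hB hC.le fun j h1 h2 => (hn j h1 (by omega)).2 h2
  have hsub : {n : ℕ | n ∈ Set.Icc 1 N ∧ InRegion l r k (x N n)} ⊆
      ↑(Finset.Icc (n₀ + 1 - M₂) (n₀ + M₁)) := by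
    rintro n ⟨⟨h1, h2⟩, h3⟩
    rw [Finset.coe_Icc, Set.mem_Icc]
    rcases Nat.lt_or_ge n₀ n with h | h
    · have := hR n h h2 (InRegion.sep hr hk hkt h3)
      omega
    · have := hL n h1 h (InRegion.sep hr hk h3 hkt)
      omega
  have hle := Set.ncard_le_ncard hsub (Finset.finite_toSet _)
  rw [Set.ncard_coe_finset, Nat.card_Icc] at hle
  have hcnt' := hcnt k hk
  rw [regionCount] at hcnt'
  omega

/-! ### Stationarity in the limit -/

theorem MIW_approximately_stationary (l : ℕ) (c : ℝ) (hc : IsNormalizing l c)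
    (r : ℕ → ℝ) (hr : ZeroEnum (heFun l c) l r)
    (Nk : ℕ → ℕ → ℕ) (x : ℕ → ℕ → ℝ)
    (hx : ∀ᶠ N in atTop,
      IsMIW (heFun l c) N (x N) ∧ LeftBC (heFun l c) (x N) ∧
      RightBC (heFun l c) N (x N) ∧
      ∀ k ≤ l, 1 ≤ Nk N k ∧ regionCount l r N (x N) k = Nk N k)
    (hNk : ∀ k ≤ l, Tendsto (fun N => Nk N k) atTop atTop) :
    ∀ t : ℝ, heFun l c t ≠ 0 →
      Tendsto (fun N => partialH N (x N) (nIdx N (x N) t)) atTop (nhds 0) := by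
  intro t ht
  have hB : ∀ᶠ N in atTop, FullMIW (score (Finset.Icc 1 l) r) N (x N) := by
    filter_upwards [hx, eventually_ge_atTop 2] with N h hN
    exact fullMIW_of hc.1 hr hN h.1 h.2.1 h.2.2.1
  have htr : ∀ i ∈ Finset.Icc 1 l, t - r i ≠ 0 := by
    intro i hi h0
    apply ht
    have : t ∈ {y : ℝ | heFun l c y = 0} :=
      hr.2 ▸ ⟨i, by simpa using hi, by linarith⟩
    exact this
  set I := Finset.Icc 1 l
  set n : ℕ → ℕ := fun N => nIdx N (x N) t with hn
  set a : ℕ → ℝ := fun N => recGap N (x N) (n N) with ha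
  have ha_top : Tendsto a atTop atTop :=
    tendsto_recGap hr hB (hx.mono fun N h k hk => (h.2.2.2 k hk).2) hNk ht
  have hpos_idx : ∀ N m, 0 < recGap N (x N) m → 1 ≤ m ∧ m < N := by
    intro N m h
    by_contra h'
    rw [recGap, if_neg h'] at h
    exact lt_irrefl _ h
  -- The point `x n` and its right neighbour enclose `t` in a gap of length `1 / a`.
  have hgap : ∀ᶠ N in atTop, x N (n N) ≤ t ∧ t ≤ x N (n N + 1) ∧
      x N (n N + 1) - x N (n N) = (a N)⁻¹ := by
    filter_upwards [hB, ha_top.eventually_gt_atTop 0] with N h hpos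
    obtain ⟨h1, h2⟩ := hpos_idx N _ hpos
    have hi := (exists_nIdx N (x N) t h.1).2
    refine ⟨(hi _ h1 h2.le).2 le_rfl, ?_, ?_⟩
    · by_contra! h'
      have : n N + 1 ≤ n N := (hi (n N + 1) (by omega) (by omega)).1 h'.le
      omega
    · have := h.recGap_mul h1 h2
      exact eq_inv_of_mul_eq_one_right this
  have hinv := tendsto_inv_atTop_zero.comp ha_top
  have hu : Tendsto (fun N => x N (n N)) atTop (nhds t) := by
    have h0 : Tendsto (fun N => t - (a N)⁻¹) atTop (nhds t) := by
      simpa using hinv.const_sub t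
    refine tendsto_of_tendsto_of_tendsto_of_le_of_le' h0 tendsto_const_nhds ?_ ?_
    · filter_upwards [hgap] with N h; linarith
    · filter_upwards [hgap] with N h; exact h.1
  have hv : Tendsto (fun N => x N (n N + 1)) atTop (nhds t) := by
    have h0 := hu.add hinv
    rw [add_zero] at h0
    refine h0.congr' ?_
    filter_upwards [hgap] with N h
    simp only [Function.comp]; linarith
  have hscore : Tendsto (fun N => score I r (x N (n N))) atTop (nhds (score I r t)) := by
    refine Tendsto.sub (Tendsto.const_mul _ (tendsto_finsetSum _ fun i hi => ?_)) hu
    exact tendsto_const_nhds.div (hu.sub_const _) (htr i hi)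
  have hb_top : Tendsto (fun N => recGap N (x N) (n N - 1)) atTop atTop := by
    refine (ha_top.atTop_add hscore.neg).congr' ?_
    filter_upwards [hB, ha_top.eventually_gt_atTop 0] with N h hpos
    obtain ⟨h1, h2⟩ := hpos_idx N _ hpos
    have := h.2 (n N) h1 h2.le
    simp only [ha]; linarith
  have hw : Tendsto (fun N => x N (n N - 1)) atTop (nhds t) := by
    have h0 := hu.sub (tendsto_inv_atTop_zero.comp hb_top)
    rw [sub_zero] at h0
    refine h0.congr' ?_
    filter_upwards [hB, hb_top.eventually_gt_atTop 0] with N h hpos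
    obtain ⟨h1, h2⟩ := hpos_idx N _ hpos
    have := eq_inv_of_mul_eq_one_right (h.recGap_mul h1 h2)
    rw [show n N - 1 + 1 = n N by omega] at this
    simp only [Function.comp]; linarith
  have hlim : Tendsto (fun N => 2 * (x N (n N) + score I r (x N (n N)) *
      (1 + 2 * ∑ i ∈ I, 1 / (x N (n N) - r i) ^ 2)
      - 2 * ∑ i ∈ I, 1 / ((x N (n N) - r i) ^ 2 * (x N (n N + 1) - r i))
      - 2 * ∑ i ∈ I, 1 / ((x N (n N) - r i) ^ 2 * (x N (n N - 1) - r i)))) atTop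
      (nhds (2 * (t + score I r t * (1 + 2 * ∑ i ∈ I, 1 / (t - r i) ^ 2)
      - 2 * ∑ i ∈ I, 1 / ((t - r i) ^ 2 * (t - r i))
      - 2 * ∑ i ∈ I, 1 / ((t - r i) ^ 2 * (t - r i))))) := by
    have h3 : ∀ w : ℕ → ℝ, Tendsto w atTop (nhds t) →
        Tendsto (fun N => 2 * ∑ i ∈ I, 1 / ((x N (n N) - r i) ^ 2 * (w N - r i))) atTop
          (nhds (2 * ∑ i ∈ I, 1 / ((t - r i) ^ 2 * (t - r i)))) := fun w hw =>
      Tendsto.const_mul _ (tendsto_finsetSum _ fun i hi => tendsto_const_nhds.div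
        (((hu.sub_const _).pow 2).mul (hw.sub_const _))
        (mul_ne_zero (pow_ne_zero _ (htr i hi)) (htr i hi)))
    refine Tendsto.const_mul _ (((hu.add (hscore.mul (Tendsto.const_add _
      (Tendsto.const_mul _ (tendsto_finsetSum _ fun i hi => ?_))))).sub (h3 _ hv)).sub (h3 _ hw))
    exact tendsto_const_nhds.div ((hu.sub_const _).pow 2) (pow_ne_zero _ (htr i hi))
  have hzero : 2 * (t + score I r t * (1 + 2 * ∑ i ∈ I, 1 / (t - r i) ^ 2)
      - 2 * ∑ i ∈ I, 1 / ((t - r i) ^ 2 * (t - r i))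
      - 2 * ∑ i ∈ I, 1 / ((t - r i) ^ 2 * (t - r i))) = 0 := by
    have := score_identity hc.1 hr ht
    simp only [← pow_succ]
    linear_combination 2 * this
  rw [hzero] at hlim
  refine hlim.congr' ?_
  have hne : ∀ w : ℕ → ℝ, Tendsto w atTop (nhds t) → ∀ᶠ N in atTop, ∀ i ∈ I, w N ≠ r i :=
    fun w hw => (Finset.eventually_all I).2 fun i hi =>
      hw.eventually_ne (sub_ne_zero.1 (htr i hi))
  filter_upwards [hB, ha_top.eventually_gt_atTop 0, hb_top.eventually_gt_atTop 0, hne _ hu,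
    hne _ hv, hne _ hw] with N h hpa hpb e1 e2 e3
  obtain ⟨h1, h2⟩ := hpos_idx N _ hpa
  obtain ⟨h3, h4⟩ := hpos_idx N _ hpb
  exact (partialH_score I r N (x N) (n N) h (by omega) h2
    fun i hi => ⟨e3 i hi, e1 i hi, e2 i hi⟩).symm
end
end

section
/- Let N ≥ 2 and let x_1 < x_2 < ⋯ < x_N be any strictly increasing real numbers. Then H(x_1,…,x_N) ≥ 2(N−1), and equality holds if and only if 1/(x_{n+1}−x_n) − 1/(x_n−x_{n−1}) = −x_n for all 1 ≤ n ≤ N (with the conventions x_0 = −∞, x_{N+1} = +∞). -/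
/-!
Expanding the square gives `H = ∑ (x n + g n)² - 2 ∑ x n * g n`, where `g n` is the gap term.
Since `g n` is a difference of consecutive reciprocal gaps, summation by parts evaluates
`∑ x n * g n = -∑ (x (n+1) - x n) / (x (n+1) - x n) = -(N - 1)` whatever the configuration
(`sum_mul_gapTerm`). Hence `H = 2 (N - 1) + ∑ (x n + g n)²`, which yields both the bound and the
equality case.
-/

open MeasureTheory Filter Set

noncomputable section

/-- Summation by parts up to an index `m ≤ N`; the boundary term on the right disappears at
`m = N`. -/
lemma sum_mul_gapTerm (N : ℕ) (x : ℕ → ℝ)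
    (hmono : ∀ n, 1 ≤ n → n < N → x n < x (n + 1)) (m : ℕ) (hm : 1 ≤ m) :
    m ≤ N → ∑ n ∈ Finset.Icc 1 m, x n * gapTerm N x n =
      -((m : ℝ) - 1) + x m * (if m < N then 1 / (x (m + 1) - x m) else 0) := by
  induction m, hm using Nat.le_induction with
  | base => intro _; simp [gapTerm]
  | succ m hm ih =>
    intro hmN
    have hlt : m < N := hmN
    have hd : x (m + 1) - x m ≠ 0 := (sub_pos.2 (hmono m hm hlt)).ne'
    have h1 : 1 < m + 1 := by omega
    rw [Finset.sum_Icc_succ_top (by omega), ih hlt.le]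
    simp only [gapTerm, hlt, h1, if_true, Nat.add_sub_cancel]
    push_cast
    have key : (x (m + 1) - x m) * (1 / (x (m + 1) - x m)) = 1 := mul_one_div_cancel hd
    linear_combination -key

lemma Hfun_eq (N : ℕ) (hN : 2 ≤ N) (x : ℕ → ℝ)
    (hmono : ∀ n, 1 ≤ n → n < N → x n < x (n + 1)) :
    Hfun N x = 2 * ((N : ℝ) - 1) + ∑ n ∈ Finset.Icc 1 N, (x n + gapTerm N x n) ^ 2 := by
  have h := sum_mul_gapTerm N x hmono N (by omega) le_rfl
  simp only [lt_irrefl, if_false, mul_zero, add_zero] at h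
  have hsq : ∑ n ∈ Finset.Icc 1 N, (x n + gapTerm N x n) ^ 2 =
      Hfun N x + 2 * ∑ n ∈ Finset.Icc 1 N, x n * gapTerm N x n := by
    rw [Hfun, Finset.mul_sum, ← Finset.sum_add_distrib, ← Finset.sum_add_distrib]
    exact Finset.sum_congr rfl fun n _ => by ring
  rw [hsq, h]
  ring

theorem H_ge_two_N_sub_one (N : ℕ) (hN : 2 ≤ N) (x : ℕ → ℝ)
    (hmono : ∀ n, 1 ≤ n → n < N → x n < x (n + 1)) :
    2 * ((N : ℝ) - 1) ≤ Hfun N x ∧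
    (Hfun N x = 2 * ((N : ℝ) - 1) ↔
      ∀ n, 1 ≤ n → n ≤ N → gapTerm N x n = -(x n)) := by
  rw [Hfun_eq N hN x hmono]
  refine ⟨le_add_of_nonneg_right (Finset.sum_nonneg fun n _ => sq_nonneg _), ?_⟩
  rw [add_eq_left, Finset.sum_eq_zero_iff_of_nonneg fun n _ => sq_nonneg _]
  simp only [Finset.mem_Icc, and_imp, sq_eq_zero_iff, add_eq_zero_iff_neg_eq, eq_comm]
end
end
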